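/- arXiv:alg-geom/9510014 — 3 statements merged into one kernel-verified Lean document; each statement's English description precedes it below -/
import Mathlib

section
/- Let Λ ⊂ ℝ^k be a full-dimensional finitely generated rational polyhedral cone with Λ ∩ (−Λ) = {0}. Then X_Λ(s) is a rational function P(s)/Q(s), where Q is the product of linear homogeneous forms defining the codimension-1 faces of Λ, P is a homogeneous polynomial, and deg P − deg Q = −k. -/
open MeasureTheory

/-- The dual cone of a cone `Λ ⊆ ℝ^k` (with respect to the standard pairing). -/
def dualCone {k : ℕ} (Λ : Set (Fin k → ℝ)) : Set (Fin k → ℝ) :=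
  {y | ∀ x ∈ Λ, 0 ≤ ∑ i, x i * y i}

/-- The X-function of a cone: `X_Λ(s) = ∫_{Λ*} e^{-⟨s,y⟩} dy`. -/
noncomputable def XFun {k : ℕ} (Λ : Set (Fin k → ℝ)) (s : Fin k → ℂ) : ℂ :=
  ∫ y in dualCone Λ, Complex.exp (-∑ i, s i * (y i : ℂ))

/-!
The dual cone `Λ*` is triangulated by choosing generic heights at its extreme rays `L j` and
projecting the lower faces of the lifted cone. On a simplicial cone spanned by rays `L j`, `j ∈ B`,
linear coordinates turn `∫ e^{-⟨s,y⟩} dy` into a product of one-dimensional integrals, with value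
`vol / ∏ j ∈ B, ⟨s, L j⟩`. Each of these fractions has `k` factors in its denominator, so over the
common denominator `∏ j, ⟨s, L j⟩` the sum has a homogeneous numerator of degree `k` less. Finally,
the extreme rays of `Λ*` are extreme points of a compact slice; such a point is determined by the
generators of `Λ` it annihilates, so these span a hyperplane and `L j` is the normal of a facet.
-/

section SupportedCombinations

variable {R ι E : Type*} [Fintype ι]

lemma mem_span_image_iff_exists_supported [Semiring R] [AddCommMonoid E] [Module R E]
    {v : ι → E} {s : Set ι} {x : E} :
    x ∈ Submodule.span R (v '' s) ↔
      ∃ c : ι → R, (∀ i ∉ s, c i = 0) ∧ ∑ i, c i • v i = x := by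
  simp only [Finsupp.mem_span_image_iff_linearCombination, Finsupp.mem_supported',
    Finsupp.linearCombination_apply, Finsupp.sum_fintype, zero_smul, implies_true]
  exact Finsupp.equivFunOnFinite.exists_congr_left

lemma linearIndepOn_iff_forall_supported [Ring R] [AddCommGroup E] [Module R E]
    {v : ι → E} {s : Set ι} :
    LinearIndepOn R v s ↔
      ∀ c : ι → R, (∀ i ∉ s, c i = 0) → ∑ i, c i • v i = 0 → c = 0 := by
  simp only [linearIndepOn_iff, Finsupp.mem_supported', Finsupp.linearCombination_apply,
    Finsupp.sum_fintype, zero_smul, implies_true, ← DFunLike.coe_fn_eq]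
  exact Finsupp.equivFunOnFinite.forall_congr_left

variable [Ring R] [PartialOrder R] [IsOrderedRing R] [AddCommGroup E] [Module R E]
  {v : ι → E} {x : E}

lemma mem_hull_image_iff {s : Set ι} :
    x ∈ PointedCone.hull R (v '' s) ↔
      ∃ c : ι → R, (∀ i, 0 ≤ c i) ∧ (∀ i ∉ s, c i = 0) ∧ ∑ i, c i • v i = x := by
  rw [PointedCone.hull, mem_span_image_iff_exists_supported]
  constructor
  · rintro ⟨c, hc, hx⟩
    exact ⟨fun i => c i, fun i => (c i).2, fun i hi => by simp [hc i hi], hx⟩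
  · rintro ⟨c, hc, hs, hx⟩
    exact ⟨fun i => ⟨c i, hc i⟩, fun i hi => Subtype.ext (hs i hi), hx⟩

lemma mem_hull_range_iff :
    x ∈ PointedCone.hull R (Set.range v) ↔
      ∃ c : ι → R, (∀ i, 0 ≤ c i) ∧ ∑ i, c i • v i = x := by
  simp [← Set.image_univ, mem_hull_image_iff]

lemma mem_hull_range_basis_iff {ι : Type*} [Finite ι] (b : Module.Basis ι R E) :
    x ∈ PointedCone.hull R (Set.range b) ↔ ∀ i, 0 ≤ b.repr x i := by
  have := Fintype.ofFinite ι
  rw [mem_hull_range_iff]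
  constructor
  · rintro ⟨c, hc, rfl⟩ i
    simpa only [b.repr_sum_self] using hc i
  · exact fun h => ⟨b.repr x, h, b.sum_repr x⟩

end SupportedCombinations

section SimplicialCone

lemma integrable_indicator_Ici_cexp {a : ℂ} (ha : 0 < a.re) :
    Integrable ((Set.Ici 0).indicator fun t : ℝ => Complex.exp (-a * t)) := by
  rw [integrable_indicator_iff measurableSet_Ici, integrableOn_Ici_iff_integrableOn_Ioi]
  exact integrableOn_exp_mul_complex_Ioi (by simpa using ha) 0

lemma integral_indicator_Ici_cexp {a : ℂ} (ha : 0 < a.re) :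
    ∫ t, (Set.Ici 0).indicator (fun t : ℝ => Complex.exp (-a * t)) t = a⁻¹ := by
  rw [integral_indicator measurableSet_Ici, integral_Ici_eq_integral_Ioi,
    integral_exp_mul_complex_Ioi (by simpa using ha) 0]
  simp

lemma indicator_hull_range_basis_cexp {ι E : Type*} [Fintype ι] [AddCommGroup E] [Module ℝ E]
    (b : Module.Basis ι ℝ E) (f : E →ₗ[ℝ] ℂ) (c : ι → ℝ) :
    (PointedCone.hull ℝ (Set.range b) : Set E).indicator (fun y => Complex.exp (-f y))
        (b.equivFun.symm c) =
      ∏ i, (Set.Ici 0).indicator (fun t : ℝ => Complex.exp (-f (b i) * t)) (c i) := by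
  have hmem : b.equivFun.symm c ∈ (PointedCone.hull ℝ (Set.range b) : Set E) ↔ ∀ i, 0 ≤ c i := by
    simp only [SetLike.mem_coe, mem_hull_range_basis_iff, ← b.equivFun_apply,
      LinearEquiv.apply_symm_apply]
  by_cases hc : ∀ i, 0 ≤ c i
  · rw [Set.indicator_of_mem (hmem.2 hc)]
    simp only [Set.indicator_of_mem (Set.mem_Ici.2 (hc _)), ← Complex.exp_sum]
    congr 1
    simp [b.equivFun_symm_apply, mul_comm]
  · rw [Set.indicator_of_notMem (hmem.not.2 hc)]
    push Not at hc
    obtain ⟨i, hi⟩ := hc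
    refine (Finset.prod_eq_zero (Finset.mem_univ i) ?_).symm
    exact Set.indicator_of_notMem (by simpa using hi) _

variable {ι E : Type*} [NormedAddCommGroup E] [NormedSpace ℝ E] [MeasurableSpace E]
  [BorelSpace E] (μ : Measure E) [μ.IsAddHaarMeasure]
  (b : Module.Basis ι ℝ E)

lemma measurableEmbedding_equivFun_symm [Finite ι] : MeasurableEmbedding b.equivFun.symm :=
  have := Fintype.ofFinite ι
  have := b.finiteDimensional_of_finite
  b.equivFun.symm.toContinuousLinearEquiv.toHomeomorph.measurableEmbedding

lemma map_equivFun_symm_volume [Fintype ι] : volume.map b.equivFun.symm = b.addHaar := by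
  have := b.finiteDimensional_of_finite
  have : (volume.map b.equivFun.symm).IsAddHaarMeasure :=
    b.equivFun.symm.toContinuousLinearEquiv.isAddHaarMeasure_map volume
  symm
  rw [b.addHaar_eq_iff, (measurableEmbedding_equivFun_symm b).map_apply, b.coe_parallelepiped]
  have hcube : b.equivFun.symm ⁻¹' parallelepiped b = Set.Icc 0 1 := by
    ext c
    simp only [Set.mem_preimage, parallelepiped_basis_eq, Set.mem_ofPred_eq, ← b.equivFun_apply,
      LinearEquiv.apply_symm_apply, Set.mem_Icc, Pi.le_def, Pi.zero_apply, Pi.one_apply,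
      forall_and]
  rw [hcube, Real.volume_Icc_pi]
  simp

lemma eq_measure_parallelepiped_smul_map_volume [Fintype ι] :
    μ = μ (parallelepiped b) • volume.map b.equivFun.symm := by
  have := b.finiteDimensional_of_finite
  rw [map_equivFun_symm_volume, b.addHaar_def, ← b.coe_parallelepiped]
  exact Measure.addHaarMeasure_unique μ b.parallelepiped

lemma measurableSet_hull_range_basis [Finite ι] :
    MeasurableSet (PointedCone.hull ℝ (Set.range b) : Set E) := by
  have : FiniteDimensional ℝ E := b.finiteDimensional_of_finite
  have hcone : (PointedCone.hull ℝ (Set.range b) : Set E) = ⋂ i, {y | 0 ≤ b.coord i y} := by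
    ext y
    simp [mem_hull_range_basis_iff]
  rw [hcone]
  exact (isClosed_iInter fun i => isClosed_le continuous_const
    (b.coord i).continuous_of_finiteDimensional).measurableSet

theorem integrableOn_cexp_hull_range_basis [Finite ι] {f : E →ₗ[ℝ] ℂ}
    (hf : ∀ i, 0 < (f (b i)).re) :
    IntegrableOn (fun y => Complex.exp (-f y)) (PointedCone.hull ℝ (Set.range b)) μ := by
  have := Fintype.ofFinite ι
  rw [← integrable_indicator_iff (measurableSet_hull_range_basis b),
    eq_measure_parallelepiped_smul_map_volume μ b]
  refine Integrable.smul_measure ?_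
    (b.coe_parallelepiped ▸ b.parallelepiped.isCompact.measure_ne_top)
  rw [(measurableEmbedding_equivFun_symm b).integrable_map_iff]
  simp only [Function.comp_def, indicator_hull_range_basis_cexp]
  exact Integrable.fintype_prod fun i => integrable_indicator_Ici_cexp (hf i)

theorem setIntegral_cexp_hull_range_basis [Fintype ι] {f : E →ₗ[ℝ] ℂ}
    (hf : ∀ i, 0 < (f (b i)).re) :
    ∫ y in PointedCone.hull ℝ (Set.range b), Complex.exp (-f y) ∂μ =
      μ.real (parallelepiped b) / ∏ i, f (b i) := by
  rw [← integral_indicator (measurableSet_hull_range_basis b)]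
  nth_rw 1 [eq_measure_parallelepiped_smul_map_volume μ b]
  rw [integral_smul_measure, (measurableEmbedding_equivFun_symm b).integral_map]
  simp only [indicator_hull_range_basis_cexp]
  rw [integral_fintype_prod_volume_eq_prod]
  simp only [integral_indicator_Ici_cexp (hf _), Finset.prod_inv_distrib]
  rw [Complex.real_smul, div_eq_mul_inv]
  rfl

end SimplicialCone

lemma exists_pos_forall_add_mul_nonneg {ι : Type*} [Finite ι] {c ν : ι → ℝ} (hc : ∀ i, 0 ≤ c i)
    (hν : ∀ i, c i = 0 → 0 ≤ ν i) : ∃ t : ℝ, 0 < t ∧ ∀ i, 0 ≤ c i + t * ν i := by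
  have hsmall : ∀ i, ∀ᶠ t in nhdsWithin (0 : ℝ) (Set.Ioi 0), 0 ≤ c i + t * ν i := by
    intro i
    rcases (hc i).eq_or_lt with h0 | hpos
    · filter_upwards [self_mem_nhdsWithin] with t ht
      rw [← h0, zero_add]
      exact mul_nonneg (le_of_lt ht) (hν i h0.symm)
    · have hlim : Filter.Tendsto (fun t : ℝ => c i + t * ν i) (nhds 0) (nhds (c i + 0 * ν i)) :=
        Continuous.tendsto (by fun_prop) 0
      rw [zero_mul, add_zero] at hlim
      filter_upwards [nhdsWithin_le_nhds (hlim.eventually (lt_mem_nhds hpos))] with t ht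
      exact le_of_lt ht
  obtain ⟨t, hnonneg, hpos⟩ := ((Filter.eventually_all.2 hsmall).and self_mem_nhdsWithin).exists
  exact ⟨t, hpos, hnonneg⟩

section IsBasisOn

variable {ι E : Type*} [AddCommGroup E] [Module ℝ E] {W : ι → E} {B : Finset ι}

/-- The vectors `W i` with `i ∈ B` form a basis of `E`; the corresponding cone is simplicial. -/
def IsBasisOn (W : ι → E) (B : Finset ι) : Prop :=
  LinearIndepOn ℝ W B ∧ Submodule.span ℝ (W '' B) = ⊤

namespace IsBasisOn

/-- The basis of `E` formed by the vectors `W i` with `i ∈ B`. -/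
noncomputable def basis (hB : IsBasisOn W B) : Module.Basis B ℝ E :=
  Module.Basis.mk hB.1 (by rw [← Set.image_eq_range]; exact hB.2.ge)

lemma coe_basis (hB : IsBasisOn W B) : ⇑hB.basis = fun i : B => W i :=
  Module.Basis.coe_mk _ _

lemma range_basis (hB : IsBasisOn W B) : Set.range hB.basis = W '' B := by
  rw [hB.coe_basis, Set.image_eq_range]
  rfl

lemma card_eq_finrank (hB : IsBasisOn W B) : B.card = Module.finrank ℝ E := by
  rw [Module.finrank_eq_card_basis hB.basis, Fintype.card_coe]

end IsBasisOn

end IsBasisOn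

namespace IsBasisOn

variable {ι E : Type*} [NormedAddCommGroup E] [NormedSpace ℝ E] [MeasurableSpace E] [BorelSpace E]
  {W : ι → E} {B : Finset ι}

lemma measurableSet_hull (hB : IsBasisOn W B) :
    MeasurableSet (PointedCone.hull ℝ (W '' B) : Set E) := by
  rw [← hB.range_basis]
  exact measurableSet_hull_range_basis hB.basis

variable (μ : Measure E) [μ.IsAddHaarMeasure] {f : E →ₗ[ℝ] ℂ}

lemma integrableOn_cexp (hB : IsBasisOn W B) (hf : ∀ i ∈ B, 0 < (f (W i)).re) :
    IntegrableOn (fun y => Complex.exp (-f y)) (PointedCone.hull ℝ (W '' B)) μ := by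
  rw [← hB.range_basis]
  refine integrableOn_cexp_hull_range_basis μ hB.basis fun i => ?_
  rw [hB.coe_basis]
  exact hf i i.2

lemma setIntegral_cexp (hB : IsBasisOn W B) (hf : ∀ i ∈ B, 0 < (f (W i)).re) :
    ∫ y in PointedCone.hull ℝ (W '' B), Complex.exp (-f y) ∂μ =
      μ.real (parallelepiped fun i : B => W i) / ∏ i ∈ B, f (W i) := by
  rw [← hB.range_basis, setIntegral_cexp_hull_range_basis μ hB.basis fun i => ?_, hB.coe_basis,
    Finset.prod_coe_sort B fun i => f (W i)]
  rw [hB.coe_basis]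
  exact hf i i.2

end IsBasisOn

section RegularTriangulation

variable {ι E : Type*} [AddCommGroup E] [Module ℝ E]

/-- The point `y` lies on none of the proper subspaces spanned by some of the vectors `W i`; the
walls of every cone spanned by these vectors avoid such a point. -/
def AvoidsWalls (W : ι → E) (y : E) : Prop :=
  ∀ S : Finset ι, y ∈ Submodule.span ℝ (W '' S) → Submodule.span ℝ (W '' S) = ⊤

lemma AvoidsWalls.ne_zero_of_mem [Fintype ι] {W : ι → E} {y : E} (hy : AvoidsWalls W y)
    {B : Finset ι} (hB : LinearIndepOn ℝ W B) {c : ι → ℝ} (hc : ∀ i ∉ B, c i = 0)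
    (hsum : ∑ i, c i • W i = y) {i : ι} (hi : i ∈ B) : c i ≠ 0 := by
  classical
  intro hci
  have hmem : y ∈ Submodule.span ℝ (W '' (B.erase i : Finset ι)) := by
    refine mem_span_image_iff_exists_supported.2 ⟨c, fun j hj => ?_, hsum⟩
    by_cases hji : j = i
    · rw [hji, hci]
    · exact hc j fun hjB => hj (Finset.mem_erase.2 ⟨hji, hjB⟩)
  refine hB.notMem_span hi ?_
  rw [← Finset.coe_erase, hy _ hmem]
  trivial

variable [Fintype ι] {W : ι → E} {h : ι → ℝ}

/-- The heights `h i` are values of a linear functional at the vectors `W i` only along linearly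
independent subfamilies; this makes the cells of the induced regular triangulation simplicial. The
functional is replaced by the condition that linear relations of the subfamily annihilate the
heights. -/
def IsGenericHeight (W : ι → E) (h : ι → ℝ) : Prop :=
  ∀ S : Finset ι,
    (∀ ν : ι → ℝ, (∀ i ∉ S, ν i = 0) → ∑ i, ν i • W i = 0 → ∑ i, ν i * h i = 0) →
      LinearIndepOn ℝ W S

lemma exists_isGenericHeight (W : ι → E) : ∃ h, IsGenericHeight W h := by
  classical
  have hrel : ∀ S : {S : Finset ι // ¬ LinearIndepOn ℝ W S}, ∃ ν : ι → ℝ,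
      (∀ i ∉ S.1, ν i = 0) ∧ ∑ i, ν i • W i = 0 ∧ ν ≠ 0 := by
    intro S
    simpa [linearIndepOn_iff_forall_supported] using S.2
  choose ν hsupp hsum hne using hrel
  obtain ⟨f, hf⟩ := Module.exists_dual_forall_apply_ne_zero (K := ℝ) ν hne
  refine ⟨fun i => f fun j => if i = j then 1 else 0, fun S hS => ?_⟩
  by_contra hdep
  refine hf ⟨S, hdep⟩ ?_
  rw [f.pi_apply_eq_sum_univ]
  exact hS _ (hsupp ⟨S, hdep⟩) (hsum _)

/-- The nonnegative coefficients `c` minimize `∑ i, c i * h i` among all nonnegative coefficients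
representing the same vector. Minimality is expressed through feasible directions. -/
structure IsMinimalCombination (W : ι → E) (h c : ι → ℝ) : Prop where
  nonneg : ∀ i, 0 ≤ c i
  le_of_feasible : ∀ ν : ι → ℝ, ∑ i, ν i • W i = 0 → (∀ i, c i = 0 → 0 ≤ ν i) →
    0 ≤ ∑ i, ν i * h i

lemma isCompact_nonneg_combinations {e : Module.Dual ℝ E} (he : ∀ i, 0 < e (W i)) (y : E) :
    IsCompact {c : ι → ℝ | (∀ i, 0 ≤ c i) ∧ ∑ i, c i • W i = y} := by
  rcases Set.eq_empty_or_nonempty {c : ι → ℝ | (∀ i, 0 ≤ c i) ∧ ∑ i, c i • W i = y} with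
    hempty | ⟨c₀, -, hc₀⟩
  · rw [hempty]
    exact isCompact_empty
  have hclosed : IsClosed {c : ι → ℝ | (∀ i, 0 ≤ c i) ∧ ∑ i, c i • W i = y} := by
    have hker := (LinearMap.ker (Fintype.linearCombination ℝ W)).closed_of_finiteDimensional
    have hset : {c : ι → ℝ | (∀ i, 0 ≤ c i) ∧ ∑ i, c i • W i = y} =
        Set.Ici 0 ∩ (fun c => c - c₀) ⁻¹' LinearMap.ker (Fintype.linearCombination ℝ W) := by
      ext c
      simp [Pi.le_def, Fintype.linearCombination_apply, sub_smul, hc₀, sub_eq_zero]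
    rw [hset]
    exact isClosed_Ici.inter (hker.preimage (by fun_prop))
  refine (isCompact_univ_pi fun i => isCompact_Icc (a := (0 : ℝ))
    (b := e y / e (W i))).of_isClosed_subset hclosed ?_
  rintro c ⟨hc, rfl⟩ i -
  refine ⟨hc i, ?_⟩
  rw [le_div_iff₀ (he i), map_sum]
  simp only [map_smul, smul_eq_mul]
  exact Finset.single_le_sum (f := fun i => c i * e (W i))
    (fun j _ => mul_nonneg (hc j) (he j).le) (Finset.mem_univ i)

lemma exists_isMinimalCombination {e : Module.Dual ℝ E} (he : ∀ i, 0 < e (W i)) (h : ι → ℝ)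
    {y : E} (hy : y ∈ PointedCone.hull ℝ (Set.range W)) :
    ∃ c, IsMinimalCombination W h c ∧ ∑ i, c i • W i = y := by
  obtain ⟨c, ⟨hc, hcy⟩, hmin⟩ :=
    (isCompact_nonneg_combinations he y).exists_isMinOn (mem_hull_range_iff.1 hy)
      (f := fun c => ∑ i, c i * h i) (by fun_prop)
  refine ⟨c, ⟨hc, fun ν hν hfeas => ?_⟩, hcy⟩
  obtain ⟨t, ht, htc⟩ := exists_pos_forall_add_mul_nonneg hc hfeas
  have hsum : ∑ i, (c i + t * ν i) • W i = y := by
    simp only [add_smul, mul_smul, Finset.sum_add_distrib, ← Finset.smul_sum, hν, smul_zero,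
      add_zero, hcy]
  have hle : ∑ i, c i * h i ≤ ∑ i, (c i + t * ν i) * h i := hmin ⟨htc, hsum⟩
  simp only [add_mul, Finset.sum_add_distrib, mul_assoc, ← Finset.mul_sum] at hle
  exact nonneg_of_mul_nonneg_right (by linarith : 0 ≤ t * ∑ i, ν i * h i) ht

lemma IsMinimalCombination.linearIndepOn {c : ι → ℝ} (hc : IsMinimalCombination W h c)
    (hh : IsGenericHeight W h) {B : Finset ι} (hB : ∀ i ∈ B, c i ≠ 0) : LinearIndepOn ℝ W B := by
  refine hh B fun ν hν hsum => le_antisymm ?_ ?_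
  · have hneg := hc.le_of_feasible (-ν) (by simp [hsum])
      fun i hi => by simp [hν i fun hiB => hB i hiB hi]
    simpa using hneg
  · exact hc.le_of_feasible ν hsum fun i hi => (hν i fun hiB => hB i hiB hi).ge

lemma map_sum_smul_eq_sum_mul {m : Module.Dual ℝ E} {B : Finset ι} (hm : ∀ i ∈ B, m (W i) = h i)
    {c : ι → ℝ} (hc : ∀ i ∉ B, c i = 0) : m (∑ i, c i • W i) = ∑ i, c i * h i := by
  rw [map_sum]
  refine Finset.sum_congr rfl fun i _ => ?_
  by_cases hi : i ∈ B
  · simp [hm i hi]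
  · simp [hc i hi]

lemma map_sum_smul_le_sum_mul {m : Module.Dual ℝ E} (hm : ∀ i, m (W i) ≤ h i) {c : ι → ℝ}
    (hc : ∀ i, 0 ≤ c i) : m (∑ i, c i • W i) ≤ ∑ i, c i * h i := by
  simpa using Finset.sum_le_sum fun i _ => mul_le_mul_of_nonneg_left (hm i) (hc i)

/-- Cells of the regular triangulation induced by the heights `h`: the set of indices at which some
linear functional below `h` touches it. Equivalently, `B` indexes the generators of a lower face of
the cone spanned by the vectors `(W i, h i)`. -/
def IsLowerCell (W : ι → E) (h : ι → ℝ) (B : Finset ι) : Prop :=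
  ∃ l : Module.Dual ℝ E, (∀ i, l (W i) ≤ h i) ∧ ∀ i, l (W i) = h i ↔ i ∈ B

lemma IsLowerCell.linearIndepOn {B : Finset ι} (hB : IsLowerCell W h B)
    (hh : IsGenericHeight W h) : LinearIndepOn ℝ W B := by
  obtain ⟨l, -, hl⟩ := hB
  refine hh B fun ν hν hsum => ?_
  rw [← map_sum_smul_eq_sum_mul (fun i hi => (hl i).2 hi) hν, hsum, map_zero]

/-- Complementary slackness: the functional matching the heights on the basis `B` lies below them
everywhere. -/
lemma IsMinimalCombination.exists_isLowerCell {c : ι → ℝ} (hc : IsMinimalCombination W h c)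
    {B : Finset ι} (hcB : ∀ i, c i = 0 → i ∉ B) (hB : IsBasisOn W B) :
    ∃ C, IsLowerCell W h C ∧ B ⊆ C := by
  classical
  let l : Module.Dual ℝ E := hB.basis.constr ℝ fun i => h i
  have hlB : ∀ i ∈ B, l (W i) = h i := by
    intro i hi
    simpa only [hB.coe_basis] using hB.basis.constr_basis ℝ (fun i => h i) ⟨i, hi⟩
  have hle : ∀ j, l (W j) ≤ h j := by
    intro j
    have hj : W j ∈ Submodule.span ℝ (W '' B) := by simp [hB.2]
    obtain ⟨a, ha, hsum⟩ := mem_span_image_iff_exists_supported.1 hj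
    have hlj : l (W j) = ∑ i, a i * h i := hsum ▸ map_sum_smul_eq_sum_mul hlB ha
    have hopt := hc.le_of_feasible (Pi.single j 1 - a)
      (by simp [sub_smul, hsum, Pi.single_apply, ite_smul]) fun i hi => by
        rw [Pi.sub_apply, ha i (hcB i hi), sub_zero]
        exact (Pi.single_nonneg.2 zero_le_one : (0 : ι → ℝ) ≤ Pi.single j 1) i
    simpa [sub_mul, Pi.single_apply, ← hlj] using hopt
  exact ⟨({i | l (W i) = h i} : Finset ι), ⟨l, hle, by simp⟩, fun i hi => by simp [hlB i hi]⟩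

lemma exists_isLowerCell_mem_hull {e : Module.Dual ℝ E} (he : ∀ i, 0 < e (W i))
    (hh : IsGenericHeight W h) {y : E} (hy : AvoidsWalls W y)
    (hmem : y ∈ PointedCone.hull ℝ (Set.range W)) :
    ∃ B, IsLowerCell W h B ∧ Submodule.span ℝ (W '' B) = ⊤ ∧
      y ∈ PointedCone.hull ℝ (W '' B) := by
  classical
  obtain ⟨c, hc, rfl⟩ := exists_isMinimalCombination he h hmem
  let B : Finset ι := {i | c i ≠ 0}
  have hyB : ∑ i, c i • W i ∈ PointedCone.hull ℝ (W '' B) :=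
    mem_hull_image_iff.2 ⟨c, hc.nonneg, by simp [B], rfl⟩
  have hspan : Submodule.span ℝ (W '' B) = ⊤ := hy B (PointedCone.hull_le_span ℝ _ hyB)
  obtain ⟨C, hC, hBC⟩ :=
    hc.exists_isLowerCell (by simp [B]) ⟨hc.linearIndepOn hh (by simp [B]), hspan⟩
  have himage : W '' B ⊆ W '' C := Set.image_mono (Finset.coe_subset.2 hBC)
  exact ⟨C, hC, top_unique (hspan ▸ Submodule.span_mono himage), Submodule.span_mono himage hyB⟩

end RegularTriangulation

section Triangulation

variable {ι E : Type*} [Finite ι] [AddCommGroup E] [Module ℝ E] {W : ι → E} {h : ι → ℝ}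

/-- The functionals of both cells take at `y` the least height of a combination representing `y`,
so the coefficients of `y` in one cell are supported on the other. -/
lemma IsLowerCell.subset {B B' : Finset ι} (hB : IsLowerCell W h B) (hB' : IsLowerCell W h B')
    (hli : LinearIndepOn ℝ W B) {y : E} (hy : AvoidsWalls W y)
    (hyB : y ∈ PointedCone.hull ℝ (W '' B)) (hyB' : y ∈ PointedCone.hull ℝ (W '' B')) :
    B ⊆ B' := by
  have := Fintype.ofFinite ι
  obtain ⟨l, hl, hlB⟩ := hB
  obtain ⟨l', hl', hlB'⟩ := hB'
  obtain ⟨c, hc, hcB, rfl⟩ := mem_hull_image_iff.1 hyB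
  obtain ⟨c', hc', hcB', hcy'⟩ := mem_hull_image_iff.1 hyB'
  have hle : ∑ i, c i * h i ≤ ∑ i, c i * l' (W i) :=
    calc ∑ i, c i * h i = l (∑ i, c' i • W i) := by
          rw [hcy', map_sum_smul_eq_sum_mul (fun i hi => (hlB i).2 hi) hcB]
      _ ≤ ∑ i, c' i * h i := map_sum_smul_le_sum_mul hl hc'
      _ = l' (∑ i, c' i • W i) := (map_sum_smul_eq_sum_mul (fun i hi => (hlB' i).2 hi) hcB').symm
      _ = ∑ i, c i * l' (W i) := by simp [hcy']
  have hterm : ∀ i, c i * l' (W i) ≤ c i * h i := fun i =>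
    mul_le_mul_of_nonneg_left (hl' i) (hc i)
  have hslack : ∀ i, c i * l' (W i) = c i * h i := by
    simpa using (Finset.sum_eq_sum_iff_of_le fun i _ => hterm i).1
      (le_antisymm (Finset.sum_le_sum fun i _ => hterm i) hle)
  exact fun i hi =>
    (hlB' i).1 (mul_left_cancel₀ (hy.ne_zero_of_mem hli hcB rfl hi) (hslack i))

/-- The simplicial cones spanned by the bases in `T` subdivide the cone spanned by all `W i`, up to
the walls of these cones. -/
structure IsTriangulation (W : ι → E) (T : Finset (Finset ι)) : Prop where
  isBasisOn : ∀ B ∈ T, IsBasisOn W B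
  existsUnique : ∀ y ∈ PointedCone.hull ℝ (Set.range W), AvoidsWalls W y →
    ∃! B ∈ T, y ∈ PointedCone.hull ℝ (W '' B)

theorem exists_isTriangulation {e : Module.Dual ℝ E} (he : ∀ i, 0 < e (W i)) :
    ∃ T, IsTriangulation W T := by
  classical
  have := Fintype.ofFinite ι
  obtain ⟨h, hh⟩ := exists_isGenericHeight W
  let T : Finset (Finset ι) := {B | IsLowerCell W h B ∧ Submodule.span ℝ (W '' B) = ⊤}
  refine ⟨T, ?_, ?_⟩
  · intro B hB
    obtain ⟨hcell, hspan⟩ := (Finset.mem_filter_univ B).1 hB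
    exact ⟨hcell.linearIndepOn hh, hspan⟩
  · intro y hmem hy
    obtain ⟨B, hcell, hspan, hyB⟩ := exists_isLowerCell_mem_hull he hh hy hmem
    refine ⟨B, ⟨(Finset.mem_filter_univ B).2 ⟨hcell, hspan⟩, hyB⟩, fun B' ⟨hB', hyB'⟩ => ?_⟩
    have hcell' := ((Finset.mem_filter_univ B').1 hB').1
    exact (hcell'.subset hcell (hcell'.linearIndepOn hh) hy hyB' hyB).antisymm
      (hcell.subset hcell' (hcell.linearIndepOn hh) hy hyB hyB')

end Triangulation

namespace IsTriangulation

variable {ι E : Type*} [Finite ι] [NormedAddCommGroup E] [NormedSpace ℝ E] [FiniteDimensional ℝ E]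
  [MeasurableSpace E] [BorelSpace E] (μ : Measure E) [μ.IsAddHaarMeasure] {W : ι → E}
  {T : Finset (Finset ι)}

lemma ae_avoidsWalls (W : ι → E) : ∀ᵐ y ∂μ, AvoidsWalls W y := by
  refine ae_all_iff.2 fun S => ?_
  by_cases hS : Submodule.span ℝ (W '' S) = ⊤
  · simp [hS]
  · have hnull : μ (Submodule.span ℝ (W '' S) : Set E) = 0 := Measure.addHaar_submodule μ _ hS
    filter_upwards [measure_eq_zero_iff_ae_notMem.1 hnull] with y hy hmem
    exact absurd hmem hy

lemma hull_ae_eq_iUnion (hT : IsTriangulation W T) :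
    (PointedCone.hull ℝ (Set.range W) : Set E) =ᵐ[μ]
      ⋃ B : T, (PointedCone.hull ℝ (W '' B) : Set E) := by
  filter_upwards [ae_avoidsWalls μ W] with y hy
  refine propext ⟨fun hmem => ?_, fun hmem => ?_⟩
  · obtain ⟨B, ⟨hB, hyB⟩, -⟩ := hT.existsUnique y hmem hy
    exact Set.mem_iUnion.2 ⟨⟨B, hB⟩, hyB⟩
  · obtain ⟨B, hyB⟩ := Set.mem_iUnion.1 hmem
    exact Submodule.span_mono (Set.image_subset_range W _) hyB

lemma pairwise_aedisjoint (hT : IsTriangulation W T) :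
    Pairwise (Function.onFun (AEDisjoint μ)
      fun B : T => (PointedCone.hull ℝ (W '' B) : Set E)) := by
  intro B B' hne
  refine measure_eq_zero_iff_ae_notMem.2 ?_
  filter_upwards [ae_avoidsWalls μ W] with y hy hmem
  have hrange : y ∈ PointedCone.hull ℝ (Set.range W) :=
    Submodule.span_mono (Set.image_subset_range W _) hmem.1
  exact hne (Subtype.ext ((hT.existsUnique y hrange hy).unique ⟨B.2, hmem.1⟩ ⟨B'.2, hmem.2⟩))

theorem setIntegral_cexp (hT : IsTriangulation W T) {f : E →ₗ[ℝ] ℂ}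
    (hf : ∀ i, 0 < (f (W i)).re) :
    ∫ y in PointedCone.hull ℝ (Set.range W), Complex.exp (-f y) ∂μ =
      ∑ B ∈ T, μ.real (parallelepiped fun i : B => W i) / ∏ i ∈ B, f (W i) := by
  rw [setIntegral_congr_set (hull_ae_eq_iUnion μ hT),
    integral_iUnion_ae (fun B : T => ((hT.isBasisOn B B.2).measurableSet_hull).nullMeasurableSet)
      (pairwise_aedisjoint μ hT)
      (integrableOn_finite_iUnion.2 fun B : T =>
        (hT.isBasisOn B B.2).integrableOn_cexp μ fun i _ => hf i),
    tsum_fintype, Finset.univ_eq_attach, ← Finset.sum_attach T]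
  exact Finset.sum_congr rfl fun B _ => (hT.isBasisOn B B.2).setIntegral_cexp μ fun i _ => hf i

end IsTriangulation

section Facets

variable {M N : Type*} [AddCommGroup M] [Module ℝ M]

lemma separatingRight_of_isPerfPair [AddCommGroup N] [Module ℝ N] (p : M →ₗ[ℝ] N →ₗ[ℝ] ℝ)
    [p.IsPerfPair] : p.SeparatingRight :=
  LinearMap.separatingRight_iff_flip_ker_eq_bot.2
    (LinearMap.ker_eq_bot.2 (LinearMap.IsPerfPair.bijective_right p).injective)

lemma pos_of_mem_interior_of_mem_dual [TopologicalSpace M] [ContinuousAdd M]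
    [ContinuousSMul ℝ M] [AddCommGroup N] [Module ℝ N] {p : M →ₗ[ℝ] N →ₗ[ℝ] ℝ}
    (hp : p.SeparatingRight) {S : Set M} {e : M} (he : e ∈ interior S) {y : N}
    (hy : y ∈ PointedCone.dual p S) (hy0 : y ≠ 0) : 0 < p e y := by
  refine (hy (interior_subset he)).lt_of_ne' fun hey => hy0 (hp y fun x => ?_)
  have hnonneg : ∀ x, 0 ≤ p x y := by
    intro x
    have hlim : Filter.Tendsto (fun t : ℝ => e + t • x) (nhdsWithin 0 (Set.Ioi 0)) (nhds e) := by
      simpa using (Continuous.tendsto (by fun_prop : Continuous fun t : ℝ => e + t • x) 0).mono_left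
        nhdsWithin_le_nhds
    obtain ⟨t, htS, ht⟩ :=
      ((hlim.eventually (mem_interior_iff_mem_nhds.1 he)).and self_mem_nhdsWithin).exists
    have htx : 0 ≤ p (e + t • x) y := hy htS
    rw [map_add, map_smul, LinearMap.add_apply, hey, zero_add] at htx
    exact nonneg_of_mul_nonneg_right htx ht
  exact le_antisymm (by simpa using hnonneg (-x)) (hnonneg x)

lemma isCompact_slice [NormedAddCommGroup N] [NormedSpace ℝ N] [FiniteDimensional ℝ N]
    {C : PointedCone ℝ N} (hC : IsClosed (C : Set N)) {f : Module.Dual ℝ N}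
    (hf : ∀ y ∈ C, y ≠ 0 → 0 < f y) : IsCompact {y | y ∈ C ∧ f y = 1} := by
  have hfc : Continuous f := f.continuous_of_finiteDimensional
  obtain ⟨δ, hδ, hδf⟩ := ((isCompact_sphere (0 : N) 1).inter_right hC).exists_forall_le'
    hfc.continuousOn fun y hy => hf y hy.2 (ne_zero_of_mem_unit_sphere ⟨y, hy.1⟩)
  refine (isCompact_closedBall (0 : N) δ⁻¹).of_isClosed_subset
    (hC.inter (isClosed_eq hfc continuous_const)) ?_
  rintro y ⟨hy, hfy⟩
  have hy0 : y ≠ 0 := by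
    rintro rfl
    simp at hfy
  have hδy : δ ≤ f (‖y‖⁻¹ • y) :=
    hδf _ ⟨by simp [norm_smul, hy0], C.smul_mem (inv_nonneg.2 (norm_nonneg y)) hy⟩
  rw [map_smul, hfy, smul_eq_mul, mul_one] at hδy
  simpa using (le_inv_comm₀ hδ (norm_pos_iff.2 hy0)).1 hδy

section Slice

variable [AddCommGroup N] [Module ℝ N] {p : M →ₗ[ℝ] N →ₗ[ℝ] ℝ} {S : Set M} {e : M} {y : N}

/-- The section of the dual cone of `S` by the hyperplane `p e y = 1`. If `e` is interior to the
cone generated by `S`, this section is compact, and its extreme points represent the extreme rays of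
the dual cone, that is, the facets of the cone generated by `S`. -/
def dualSlice (p : M →ₗ[ℝ] N →ₗ[ℝ] ℝ) (S : Set M) (e : M) : Set N :=
  {y | y ∈ PointedCone.dual p S ∧ p e y = 1}

lemma convex_dualSlice : Convex ℝ (dualSlice p S e) :=
  (PointedCone.convex _).inter (convex_hyperplane (p e).isLinear 1)

lemma ne_zero_of_mem_dualSlice (hy : y ∈ dualSlice p S e) : y ≠ 0 := by
  rintro rfl
  simpa using hy.2

/-- Otherwise `y` is the midpoint of `y ± t • z`, which lie in the slice for small `t > 0`. -/
lemma eq_zero_of_mem_extremePoints_dualSlice (hS : S.Finite)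
    (hy : y ∈ (dualSlice p S e).extremePoints ℝ) {z : N} (hez : p e z = 0)
    (hz : ∀ x ∈ S, p x y = 0 → p x z = 0) : z = 0 := by
  have := hS.to_subtype
  obtain ⟨⟨hyS, hey⟩, hext⟩ := mem_extremePoints_iff_left.1 hy
  obtain ⟨t, ht, htS⟩ := exists_pos_forall_add_mul_nonneg
    (c := Sum.elim (fun x : S => p x y) fun x : S => p x y)
    (ν := Sum.elim (fun x : S => p x z) fun x : S => -p x z)
    (by simpa using fun x hx => hyS hx)
    (by
      rintro (x | x) hx
      · exact (hz x x.2 hx).ge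
      · exact (neg_eq_zero.2 (hz x x.2 hx)).ge)
  have hplus : y + t • z ∈ dualSlice p S e :=
    ⟨fun x hx => by simpa using htS (.inl ⟨x, hx⟩), by simp [hey, hez]⟩
  have hminus : y - t • z ∈ dualSlice p S e :=
    ⟨fun x hx => by simpa [sub_eq_add_neg] using htS (.inr ⟨x, hx⟩), by simp [hey, hez]⟩
  have hmid : y ∈ openSegment ℝ (y + t • z) (y - t • z) :=
    ⟨1 / 2, 1 / 2, by norm_num, by norm_num, by norm_num, by module⟩
  simpa [ht.ne'] using hext _ hplus _ hminus hmid

lemma finite_extremePoints_dualSlice (hS : S.Finite) :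
    ((dualSlice p S e).extremePoints ℝ).Finite := by
  refine Set.Finite.of_finite_image (f := fun y => {x ∈ S | p x y = 0})
    (hS.finite_subsets.subset ?_) ?_
  · rintro _ ⟨y, -, rfl⟩
    exact Set.sep_subset _ _
  · intro y hy y' hy' htight
    have hey : p e y = 1 := hy.1.2
    have hey' : p e y' = 1 := hy'.1.2
    refine sub_eq_zero.1 (eq_zero_of_mem_extremePoints_dualSlice hS hy' (z := y - y') ?_ ?_)
    · simp [hey, hey']
    · intro x hx hxy'
      have hxy : p x y = 0 := (htight.ge ⟨hx, hxy'⟩ : x ∈ {x ∈ S | p x y = 0}).2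
      simp [hxy, hxy']

lemma span_tight_eq_ker [p.IsPerfPair] (hS : S.Finite)
    (hy : y ∈ (dualSlice p S e).extremePoints ℝ) :
    Submodule.span ℝ {x ∈ S | p x y = 0} = LinearMap.ker (p.flip y) := by
  refine le_antisymm (Submodule.span_le.2 fun x hx => hx.2) fun w hw => ?_
  by_contra hspan
  obtain ⟨f, hfw, hf⟩ := Submodule.exists_le_ker_of_notMem hspan
  have hey : p e y = 1 := hy.1.2
  have hz := eq_zero_of_mem_extremePoints_dualSlice hS hy
    (z := p.flip.toPerfPair.symm f - f e • y) (by simp [hey]) fun x hx hxy => by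
      simpa [hxy] using hf (Submodule.subset_span ⟨hx, hxy⟩)
  have hwy : p w y = 0 := hw
  exact hfw (by simpa [hwy] using congrArg (p w) hz)

lemma finrank_span_facet [FiniteDimensional ℝ M] [p.IsPerfPair] (hS : S.Finite)
    (hy : y ∈ (dualSlice p S e).extremePoints ℝ) {Λ : PointedCone ℝ M} (hSΛ : S ⊆ Λ) :
    Module.finrank ℝ (Submodule.span ℝ {x | x ∈ Λ ∧ p x y = 0}) = Module.finrank ℝ M - 1 := by
  have hspan : Submodule.span ℝ {x | x ∈ Λ ∧ p x y = 0} = LinearMap.ker (p.flip y) :=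
    le_antisymm (Submodule.span_le.2 fun x hx => hx.2)
      ((span_tight_eq_ker hS hy).ge.trans
        (Submodule.span_mono fun x hx => ⟨hSΛ hx.1, hx.2⟩))
  have hne : p.flip y ≠ 0 := fun h0 => by
    have hey : p e y = 1 := hy.1.2
    simp [← LinearMap.flip_apply, h0] at hey
  rw [hspan, ← Module.Dual.finrank_ker_add_one_of_ne_zero hne, Nat.add_sub_cancel]

end Slice

section FiniteDimensional

variable [NormedAddCommGroup N] [NormedSpace ℝ N] [FiniteDimensional ℝ N]
  {p : M →ₗ[ℝ] N →ₗ[ℝ] ℝ} {S : Set M} {e : M}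

lemma dual_eq_hull_extremePoints (hS : S.Finite)
    (he : ∀ y ∈ PointedCone.dual p S, y ≠ 0 → 0 < p e y) :
    PointedCone.dual p S = PointedCone.hull ℝ ((dualSlice p S e).extremePoints ℝ) := by
  have hslice : dualSlice p S e = convexHull ℝ ((dualSlice p S e).extremePoints ℝ) := by
    rw [← ((finite_extremePoints_dualSlice hS).isClosed_convexHull ℝ).closure_eq]
    refine (closure_convexHull_extremePoints ?_ convex_dualSlice).symm
    exact isCompact_slice
      (PointedCone.isClosed_dual fun x => (p x).continuous_of_finiteDimensional) he
  have hhull : dualSlice p S e ⊆ PointedCone.hull ℝ ((dualSlice p S e).extremePoints ℝ) :=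
    hslice.trans_subset (convexHull_min PointedCone.subset_hull (PointedCone.convex _))
  refine le_antisymm (fun y hy => ?_) (Submodule.span_le.2 fun y hy => hy.1.1)
  rcases eq_or_ne y 0 with rfl | hy0
  · exact zero_mem _
  · have hey := he y hy hy0
    have hmem : (p e y)⁻¹ • y ∈ dualSlice p S e :=
      ⟨PointedCone.smul_mem _ (inv_nonneg.2 hey.le) hy, by simp [hey.ne']⟩
    exact (PointedCone.smul_mem_iff _ (inv_pos.2 hey)).1 (hhull hmem)

end FiniteDimensional

section Salient

variable [AddCommGroup N] [Module ℝ N] {p : M →ₗ[ℝ] N →ₗ[ℝ] ℝ} {S : Set M}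

lemma span_dual_eq_top (hS : S.Finite) {y₀ : N} (hy₀ : ∀ x ∈ S, x ≠ 0 → 0 < p x y₀) :
    Submodule.span ℝ (PointedCone.dual p S : Set N) = ⊤ := by
  refine Submodule.eq_top_iff'.2 fun z => ?_
  have := hS.to_subtype
  have hmem : y₀ ∈ PointedCone.dual p S := by
    intro x hx
    rcases eq_or_ne x 0 with rfl | hx0
    · simp
    · exact (hy₀ x hx hx0).le
  obtain ⟨t, ht, htS⟩ := exists_pos_forall_add_mul_nonneg (c := fun x : S => p x y₀)
    (ν := fun x : S => p x z) (fun x => hmem x.2) fun x hx => by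
      have hx0 : (x : M) = 0 := by_contra fun hx0 => (hy₀ x x.2 hx0).ne' hx
      simp [hx0]
  have hmem' : y₀ + t • z ∈ PointedCone.dual p S := fun x hx => by simpa using htS ⟨x, hx⟩
  have hdiff := sub_mem (Submodule.subset_span (R := ℝ) hmem') (Submodule.subset_span hmem)
  rw [add_sub_cancel_left] at hdiff
  exact (Submodule.smul_mem_iff _ ht.ne').1 hdiff

lemma convex_ne_zero_of_salient {Λ : PointedCone ℝ M} (hΛ : (Λ : ConvexCone ℝ M).Salient) :
    Convex ℝ {x | x ∈ Λ ∧ x ≠ 0} := by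
  refine convex_iff_forall_pos.2 fun x hx y hy a b ha hb _ => ⟨?_, fun hsum => ?_⟩
  · exact add_mem (Λ.smul_mem ha.le hx.1) (Λ.smul_mem hb.le hy.1)
  · refine hΛ (a • x) (Λ.smul_mem ha.le hx.1) (smul_ne_zero ha.ne' hx.2) ?_
    rw [neg_eq_of_add_eq_zero_right hsum]
    exact Λ.smul_mem hb.le hy.1

lemma exists_forall_pos_of_salient {M : Type*} [NormedAddCommGroup M] [NormedSpace ℝ M]
    {Λ : PointedCone ℝ M} (hΛ : (Λ : ConvexCone ℝ M).Salient) {S : Set M} (hS : S.Finite)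
    (hSΛ : S ⊆ Λ) : ∃ φ : StrongDual ℝ M, ∀ x ∈ S, x ≠ 0 → 0 < φ x := by
  have hsub : convexHull ℝ {x ∈ S | x ≠ 0} ⊆ {x | x ∈ Λ ∧ x ≠ 0} :=
    convexHull_min (fun x hx => ⟨hSΛ hx.1, hx.2⟩) (convex_ne_zero_of_salient hΛ)
  obtain ⟨φ, u, hφu, hφ⟩ := geometric_hahn_banach_point_closed (convex_convexHull ℝ _)
    ((hS.subset (Set.sep_subset S _)).isClosed_convexHull ℝ) fun h0 => (hsub h0).2 rfl
  rw [map_zero] at hφu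
  exact ⟨φ, fun x hx hx0 => hφu.trans (hφ x (subset_convexHull ℝ _ ⟨hx, hx0⟩))⟩

end Salient

theorem exists_facet_normals {M : Type*} [NormedAddCommGroup M] [NormedSpace ℝ M]
    [FiniteDimensional ℝ M] [NormedAddCommGroup N] [NormedSpace ℝ N] [FiniteDimensional ℝ N]
    {p : M →ₗ[ℝ] N →ₗ[ℝ] ℝ} [p.IsPerfPair] {Λ : PointedCone ℝ M} (hΛ : Λ.FG)
    (hsal : (Λ : ConvexCone ℝ M).Salient) (hfull : (interior (Λ : Set M)).Nonempty) :
    ∃ (m : ℕ) (L : Fin m → N),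
      PointedCone.dual p (Λ : Set M) = PointedCone.hull ℝ (Set.range L) ∧
      (∀ j, L j ≠ 0) ∧
      (∀ j, Module.finrank ℝ (Submodule.span ℝ {x | x ∈ Λ ∧ p x (L j) = 0}) =
        Module.finrank ℝ M - 1) ∧
      Module.finrank ℝ N ≤ m := by
  obtain ⟨S, rfl⟩ := hΛ
  obtain ⟨e, he⟩ := hfull
  have hS : (S : Set M).Finite := S.finite_toSet
  have hSΛ : (S : Set M) ⊆ PointedCone.hull ℝ (S : Set M) := PointedCone.subset_hull
  have hdual := PointedCone.dual_hull (p := p) (S : Set M)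
  have hpos : ∀ y ∈ PointedCone.dual p (S : Set M), y ≠ 0 → 0 < p e y := fun y hy =>
    pos_of_mem_interior_of_mem_dual (separatingRight_of_isPerfPair p) he (hdual ▸ hy)
  obtain ⟨m, L, -, hL⟩ := (finite_extremePoints_dualSlice (p := p) (e := e) hS).fin_param
  have hLmem : ∀ j, L j ∈ (dualSlice p S e).extremePoints ℝ := fun j => hL ▸ Set.mem_range_self j
  have hrays : PointedCone.dual p (S : Set M) = PointedCone.hull ℝ (Set.range L) := by
    rw [hL, dual_eq_hull_extremePoints hS hpos]
  refine ⟨m, L, hdual.trans hrays, fun j => ne_zero_of_mem_dualSlice (hLmem j).1,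
    fun j => finrank_span_facet hS (hLmem j) hSΛ, ?_⟩
  obtain ⟨φ, hφ⟩ := exists_forall_pos_of_salient hsal hS hSΛ
  have hspan := span_dual_eq_top (p := p) hS (y₀ := p.flip.toPerfPair.symm φ) (by simpa using hφ)
  have htop : Submodule.span ℝ (Set.range L) = ⊤ := by
    rw [eq_top_iff, ← hspan, hrays, Submodule.span_le]
    exact PointedCone.hull_le_span ℝ _
  calc Module.finrank ℝ N = (Set.range L).finrank ℝ := by rw [Set.finrank, htop, finrank_top]
    _ ≤ m := by simpa using finrank_range_le_card L

end Facets

section CommonDenominator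

variable {ι σ R : Type*} [Fintype ι] [DecidableEq ι] [Fintype σ] [CommSemiring R]

/-- The numerator, over the common denominator `∏ i, L i`, of the sum over `B ∈ T` of the fractions
`a B / ∏ i ∈ B, L i`, where `L i` is the linear form with coefficients the `i`-th row of `L`. -/
noncomputable def commonNumerator (T : Finset (Finset ι)) (a : Finset ι → R) (L : Matrix ι σ R) :
    MvPolynomial σ R :=
  ∑ B ∈ T, MvPolynomial.C (a B) * ∏ i ∈ Bᶜ, L.toMvPolynomial i

variable {T : Finset (Finset ι)}

lemma isHomogeneous_commonNumerator {n : ℕ} (hT : ∀ B ∈ T, B.card = n) (a : Finset ι → R)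
    (L : Matrix ι σ R) : (commonNumerator T a L).IsHomogeneous (Fintype.card ι - n) := by
  refine MvPolynomial.IsHomogeneous.sum _ _ _ fun B hB => MvPolynomial.IsHomogeneous.C_mul ?_ _
  rw [← hT B hB, ← Finset.card_compl, Finset.card_eq_sum_ones]
  exact MvPolynomial.IsHomogeneous.prod _ _ _ fun i _ => L.toMvPolynomial_isHomogeneous i

lemma map_commonNumerator {S : Type*} [CommSemiring S] (f : R →+* S) (a : Finset ι → R)
    (L : Matrix ι σ R) :
    (commonNumerator T a L).map f = commonNumerator T (fun B => f (a B)) (L.map f) := by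
  simp [commonNumerator, Matrix.toMvPolynomial_map]

lemma sum_div_prod_mul_prod_eq_eval_commonNumerator {K : Type*} [Field K] (a : Finset ι → K)
    {L : Matrix ι σ K} {s : σ → K} (hs : ∀ i, (L.mulVec s) i ≠ 0) :
    (∑ B ∈ T, a B / ∏ i ∈ B, L.mulVec s i) * ∏ i, L.mulVec s i =
      (commonNumerator T a L).eval s := by
  simp only [commonNumerator, map_sum, map_mul, map_prod, MvPolynomial.eval_C,
    Matrix.toMvPolynomial_eval_eq_apply, Finset.sum_mul]
  refine Finset.sum_congr rfl fun B _ => ?_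
  rw [← Finset.prod_mul_prod_compl B, ← mul_assoc,
    div_mul_cancel₀ _ (Finset.prod_ne_zero_iff.2 fun i _ => hs i)]

end CommonDenominator

section XFunction

instance isPerfPair_dotProductBilin {ι K : Type*} [Fintype ι] [Field K] :
    (dotProductBilin (m := ι) K K).IsPerfPair := by
  classical
  have hinj : Function.Injective (dotProductBilin (m := ι) K K) := (dotProductEquiv K ι).injective
  refine LinearMap.IsPerfPair.of_injective hinj fun x y hxy => hinj (LinearMap.ext fun z => ?_)
  simpa [dotProduct_comm] using LinearMap.congr_fun hxy z

variable {k : ℕ}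

lemma dualCone_eq_dual (Λ : Set (Fin k → ℝ)) :
    dualCone Λ = PointedCone.dual (dotProductBilin ℝ ℝ) Λ := rfl

lemma XFun_eq_setIntegral_linearCombination (Λ : Set (Fin k → ℝ)) (s : Fin k → ℂ) :
    XFun Λ s = ∫ y in PointedCone.dual (dotProductBilin ℝ ℝ) Λ,
      Complex.exp (-Fintype.linearCombination ℝ s y) := by
  simp only [XFun, dualCone_eq_dual, Fintype.linearCombination_apply, Complex.real_smul, mul_comm]

lemma linearCombination_eq_mulVec {ι : Type*} (L : ι → Fin k → ℝ) (s : Fin k → ℂ) (i : ι) :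
    Fintype.linearCombination ℝ s (L i) = ((Matrix.of L).map (algebraMap ℝ ℂ)).mulVec s i := by
  simp [Fintype.linearCombination_apply, Matrix.mulVec, dotProduct]

lemma re_linearCombination (s : Fin k → ℂ) (y : Fin k → ℝ) :
    (Fintype.linearCombination ℝ s y).re = dotProductBilin ℝ ℝ (fun i => (s i).re) y := by
  simp [Fintype.linearCombination_apply, dotProduct, mul_comm]

theorem XFun_mul_prod_eq_eval {ι : Type*} [Fintype ι] [DecidableEq ι] {Λ : Set (Fin k → ℝ)}
    {L : ι → Fin k → ℝ}
    (hL : PointedCone.dual (dotProductBilin ℝ ℝ) Λ = PointedCone.hull ℝ (Set.range L))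
    {T : Finset (Finset ι)} (hT : IsTriangulation L T) {s : Fin k → ℂ}
    (hs : ∀ j, 0 < dotProductBilin ℝ ℝ (fun i => (s i).re) (L j)) :
    XFun Λ s * ∏ j, ∑ i, (L j i : ℂ) * s i =
      MvPolynomial.eval s ((commonNumerator T
        (fun B => volume.real (parallelepiped fun i : B => L i)) (Matrix.of L)).map
          (algebraMap ℝ ℂ)) := by
  have hre : ∀ j, 0 < (Fintype.linearCombination ℝ s (L j)).re := fun j => by
    rw [re_linearCombination]
    exact hs j
  have hne : ∀ j, ((Matrix.of L).map (algebraMap ℝ ℂ)).mulVec s j ≠ 0 := fun j => by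
    rw [← linearCombination_eq_mulVec]
    exact fun h0 => (hre j).ne' (by rw [h0, Complex.zero_re])
  rw [map_commonNumerator, ← sum_div_prod_mul_prod_eq_eval_commonNumerator _ hne,
    XFun_eq_setIntegral_linearCombination, hL, hT.setIntegral_cexp volume hre]
  simp only [linearCombination_eq_mulVec]
  rfl

theorem XFunction_rational_general (Λ : PointedCone ℝ (Fin k → ℝ)) (hΛ : Λ.FG)
    (hsal : (Λ : ConvexCone ℝ (Fin k → ℝ)).Salient)
    (hfull : (interior (Λ : Set (Fin k → ℝ))).Nonempty) :
    ∃ (d : ℕ) (P : MvPolynomial (Fin k) ℝ), P.IsHomogeneous d ∧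
      ∃ (p : ℕ) (L : Fin p → Fin k → ℝ),
        (∀ j, ∀ x ∈ Λ, 0 ≤ ∑ i, L j i * x i) ∧
        (∀ j, Module.finrank ℝ
            (Submodule.span ℝ {x | x ∈ Λ ∧ ∑ i, L j i * x i = 0}) = k - 1) ∧
        (d : ℤ) - (p : ℤ) = -(k : ℤ) ∧
        ∀ s : Fin k → ℂ, (fun i => (s i).re) ∈ interior (Λ : Set (Fin k → ℝ)) →
          XFun Λ s * ∏ j, (∑ i, (L j i : ℂ) * s i)
            = MvPolynomial.eval s (P.map (algebraMap ℝ ℂ)) := by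
  obtain ⟨m, L, hdual, hL0, hfacet, hkm⟩ :=
    exists_facet_normals (p := dotProductBilin ℝ ℝ) hΛ hsal hfull
  simp only [Module.finrank_fin_fun] at hfacet hkm
  have hLdual : ∀ j, L j ∈ PointedCone.dual (dotProductBilin ℝ ℝ) (Λ : Set (Fin k → ℝ)) :=
    fun j => hdual ▸ PointedCone.subset_hull (Set.mem_range_self j)
  have hpos : ∀ e ∈ interior (Λ : Set (Fin k → ℝ)), ∀ j, 0 < dotProductBilin ℝ ℝ e (L j) :=
    fun e he j =>
      pos_of_mem_interior_of_mem_dual (separatingRight_of_isPerfPair _) he (hLdual j) (hL0 j)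
  obtain ⟨T, hT⟩ := exists_isTriangulation (hpos _ hfull.some_mem)
  have hhom := isHomogeneous_commonNumerator (fun B hB => (hT.isBasisOn B hB).card_eq_finrank)
    (fun B => volume.real (parallelepiped fun i : B => L i)) (Matrix.of L)
  rw [Fintype.card_fin, Module.finrank_fin_fun] at hhom
  have hdot : ∀ (x : Fin k → ℝ) j, ∑ i, L j i * x i = dotProductBilin ℝ ℝ x (L j) := fun x j =>
    dotProduct_comm (L j) x
  have hset : ∀ j, {x | x ∈ Λ ∧ ∑ i, L j i * x i = 0} =
      {x | x ∈ Λ ∧ dotProductBilin ℝ ℝ x (L j) = 0} := fun j =>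
    Set.ext fun x => and_congr_right' (by rw [hdot])
  exact ⟨m - k, _, hhom, m, L, fun j x hx => (hdot x j).symm ▸ hLdual j hx,
    fun j => (hset j).symm ▸ hfacet j, by omega,
    fun s hs => XFun_mul_prod_eq_eval hdual hT (hpos _ hs)⟩

end XFunction

/-- the X-function of a full-dimensional finitely generated rational
polyhedral cone `Λ` with `Λ ∩ (−Λ) = {0}` is a rational function `P/Q` where `P` is a
homogeneous polynomial, `Q` is a product of linear homogeneous forms, each nonnegative
on `Λ` and vanishing on a codimension-1 face of `Λ`, and `deg P − deg Q = −k`. -/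
theorem XFunction_rational (k n : ℕ) (hk : 0 < k) (g : Fin n → Fin k → ℚ)
    (Λ : Set (Fin k → ℝ))
    (hΛ : Λ = {x | ∃ c : Fin n → ℝ, (∀ j, 0 ≤ c j) ∧
      x = ∑ j, c j • fun i => ((g j i : ℝ))})
    (hsal : Λ ∩ (-Λ) = {0}) (hfull : (interior Λ).Nonempty) :
    ∃ (d : ℕ) (P : MvPolynomial (Fin k) ℝ), P.IsHomogeneous d ∧
      ∃ (p : ℕ) (L : Fin p → Fin k → ℝ),
        (∀ j, ∀ x ∈ Λ, 0 ≤ ∑ i, L j i * x i) ∧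
        (∀ j, Module.finrank ℝ
            (Submodule.span ℝ {x | x ∈ Λ ∧ ∑ i, L j i * x i = 0}) = k - 1) ∧
        (d : ℤ) - (p : ℤ) = -(k : ℤ) ∧
        ∀ s : Fin k → ℂ, (fun i => (s i).re) ∈ interior Λ →
          XFun Λ s * ∏ j, (∑ i, (L j i : ℂ) * s i)
            = MvPolynomial.eval s (P.map (algebraMap ℝ ℂ)) := by
  have hcone : Λ = (PointedCone.hull ℝ (Set.range fun j i => (g j i : ℝ)) : Set _) := by
    ext x
    simp only [hΛ, Set.mem_ofPred_eq, SetLike.mem_coe, mem_hull_range_iff, eq_comm]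
  rw [hcone] at hsal hfull ⊢
  exact XFunction_rational_general _ (Submodule.fg_span (Set.finite_range _))
    ((PointedCone.salient_iff_inter_neg_eq_singleton _).2 hsal) hfull
end

section
/- Let the cone Λ_eff ⊂ ℝ^4 (with coordinates indexed by divisor classes) be the image under the linear projection ψ : ℝ^6 → ℝ^6/M_ℝ of the positive orthant ℝ^6_{≥0}, where M ⊂ ℤ^6 is the rank-2 sublattice spanned by γ₁ = e₁ + e₅ − e₂ − e₆ and γ₂ = e₁ + e₄ − e₃ − e₆ (coordinates ordered as (s₁, s₂, s₃, s₁₂, s₁₃, s₂₃)). Then the X-function of Λ_eff evaluated at ψ(s) equals (s₁+s₂+s₃+s₁₂+s₁₃+s₂₃) / ((s₁+s₂₃)(s₂+s₁₃)(s₃+s₁₂)(s₁+s₂+s₃)(s₁₂+s₁₃+s₂₃)). -/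
open MeasureTheory

/-- The lattice vector `γ₁ = e₁ + e₅ − e₂ − e₆` (coordinates ordered
`(s₁, s₂, s₃, s₁₂, s₁₃, s₂₃)`). -/
noncomputable def gammaOne : Fin 6 → ℝ := ![1, -1, 0, 0, 1, -1]

/-- The lattice vector `γ₂ = e₁ + e₄ − e₃ − e₆`. -/
noncomputable def gammaTwo : Fin 6 → ℝ := ![1, 0, -1, 1, 0, -1]

/-!
After the substitution `y = 2πw` the six factors pair up by opposite values of `y_j`: the pairs
`(s₁₃, s₂)`, `(s₁₂, s₃)` and `(s₁, s₂₃)` contribute `(p + 2πix)⁻¹ (q - 2πix)⁻¹` with `x` equal to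
`w₁`, `w₂` and `w₁ + w₂` respectively. Each such pair is, up to the factor `(p + q)⁻¹`, the Fourier
transform of the two-sided exponential `t ↦ e^{qt}` for `t ≤ 0`, `t ↦ e^{-pt}` for `t ≥ 0`.
Self-adjointness of the Fourier transform turns the integral over `w` into the integral over `t` of
a product of three two-sided exponentials. By Fourier inversion the first two enter with their decay
rates exchanged, and the product is the two-sided exponential with rates `s₁ + s₂ + s₃` and
`s₁₂ + s₁₃ + s₂₃`, whose integral is the sum of the reciprocals of these rates.
-/

open scoped FourierTransform

theorem integral_fourier_sum_mul_prod {ι V : Type*} [Fintype ι] [NormedAddCommGroup V]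
    [InnerProductSpace ℝ V] [FiniteDimensional ℝ V] [MeasurableSpace V] [BorelSpace V]
    {g : V → ℂ} {f : ι → V → ℂ} (hg : Integrable g) (hf : ∀ i, Integrable (f i)) :
    ∫ w : ι → V, 𝓕 g (∑ i, w i) * ∏ i, f i (w i) = ∫ v, g v * ∏ i, 𝓕 (f i) v := by
  let L : V →ₗ[ℝ] (ι → V) →ₗ[ℝ] ℝ := (innerₗ V).compl₂ (∑ i, LinearMap.proj i)
  have hL (v : V) (w : ι → V) : L v w = ∑ i, inner ℝ v (w i) := by
    simp [L]
  have hLc : Continuous fun p : V × (ι → V) ↦ L p.1 p.2 := by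
    simp only [hL]
    fun_prop
  have fourier_sum (w : ι → V) :
      𝓕 g (∑ i, w i) = VectorFourier.fourierIntegral 𝐞 volume L g w := by
    simp [Real.fourier_eq, VectorFourier.fourierIntegral, hL, inner_sum]
  have fourierChar_sum (x : ι → ℝ) : (𝐞 (∑ i, x i) : ℂ) = ∏ i, (𝐞 (x i) : ℂ) := by
    simp [Real.fourierChar_apply, Finset.mul_sum, Finset.sum_mul, Complex.exp_sum]
  have fourier_prod (v : V) :
      VectorFourier.fourierIntegral 𝐞 volume L.flip (fun w : ι → V ↦ ∏ i, f i (w i)) v =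
        ∏ i, 𝓕 (f i) v := by
    simp_rw [Real.fourier_eq, ← integral_fintype_prod_volume_eq_prod,
      VectorFourier.fourierIntegral, LinearMap.flip_apply, hL, ← Finset.sum_neg_distrib,
      Circle.smul_def, fourierChar_sum, smul_eq_mul, Finset.prod_mul_distrib, real_inner_comm]
  simp_rw [fourier_sum, ← fourier_prod]
  exact VectorFourier.integral_fourierIntegral_smul_eq_flip Real.continuous_fourierChar hLc hg
    (Integrable.fintype_prod hf)

/-- The two-sided exponential `e^{qt}` for `t ≤ 0`, `e^{-pt}` for `t ≥ 0`. Writing both branches in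
one formula makes the algebraic rules for products and reflections identities of exponents. -/
noncomputable def twoSidedExp (p q : ℂ) (t : ℝ) : ℂ :=
  Complex.exp (q * (min t 0 : ℝ) - p * (max t 0 : ℝ))

namespace twoSidedExp

theorem continuous (p q : ℂ) : Continuous (twoSidedExp p q) := by
  unfold twoSidedExp
  fun_prop

theorem apply_neg (p q : ℂ) (t : ℝ) : twoSidedExp p q (-t) = twoSidedExp q p t := by
  have hmin : min (-t) 0 = -max t 0 := by simpa using min_neg_neg t 0
  have hmax : max (-t) 0 = -min t 0 := by simpa using max_neg_neg t 0
  simp only [twoSidedExp, hmin, hmax]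
  push_cast
  ring_nf

theorem apply_mul_apply (p q p' q' : ℂ) (t : ℝ) :
    twoSidedExp p q t * twoSidedExp p' q' t = twoSidedExp (p + p') (q + q') t := by
  rw [twoSidedExp, twoSidedExp, twoSidedExp, ← Complex.exp_add]
  ring_nf

theorem prod_apply {ι : Type*} (I : Finset ι) (p q : ι → ℂ) (t : ℝ) :
    ∏ i ∈ I, twoSidedExp (p i) (q i) t = twoSidedExp (∑ i ∈ I, p i) (∑ i ∈ I, q i) t := by
  simp only [twoSidedExp, ← Complex.exp_sum, Finset.sum_sub_distrib, Finset.sum_mul]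

theorem exp_mul_apply (z p q : ℂ) (t : ℝ) :
    Complex.exp (-z * t) * twoSidedExp p q t = twoSidedExp (p + z) (q - z) t := by
  have ht : (t : ℂ) = (min t 0 : ℝ) + (max t 0 : ℝ) := by
    rw [← Complex.ofReal_add, min_add_max, add_zero]
  rw [twoSidedExp, twoSidedExp, ← Complex.exp_add]
  nth_rw 1 [ht]
  ring_nf

theorem eqOn_Iic (p q : ℂ) :
    Set.EqOn (twoSidedExp p q) (fun t ↦ Complex.exp (q * t)) (Set.Iic 0) := fun t ht ↦ by
  simp [twoSidedExp, min_eq_left (Set.mem_Iic.mp ht), max_eq_right (Set.mem_Iic.mp ht)]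

theorem eqOn_Ioi (p q : ℂ) :
    Set.EqOn (twoSidedExp p q) (fun t ↦ Complex.exp (-p * t)) (Set.Ioi 0) := fun t ht ↦ by
  simp [twoSidedExp, min_eq_right (Set.mem_Ioi.mp ht).le, max_eq_left (Set.mem_Ioi.mp ht).le]

variable {p q : ℂ}

theorem integrableOn_Iic (hq : 0 < q.re) : IntegrableOn (twoSidedExp p q) (Set.Iic 0) :=
  (integrableOn_exp_mul_complex_Iic hq 0).congr_fun (eqOn_Iic p q).symm measurableSet_Iic

theorem integrableOn_Ioi (hp : 0 < p.re) : IntegrableOn (twoSidedExp p q) (Set.Ioi 0) :=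
  (integrableOn_exp_mul_complex_Ioi (a := -p) (by simpa using hp) 0).congr_fun
    (eqOn_Ioi p q).symm measurableSet_Ioi

theorem integrable (hp : 0 < p.re) (hq : 0 < q.re) : Integrable (twoSidedExp p q) := by
  rw [← integrableOn_univ, ← Set.Iic_union_Ioi (a := (0 : ℝ))]
  exact (integrableOn_Iic hq).union (integrableOn_Ioi hp)

theorem integral_eq (hp : 0 < p.re) (hq : 0 < q.re) :
    ∫ t, twoSidedExp p q t = p⁻¹ + q⁻¹ := by
  rw [← intervalIntegral.integral_Iic_add_Ioi (integrableOn_Iic hq) (integrableOn_Ioi hp),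
    setIntegral_congr_fun measurableSet_Iic (eqOn_Iic p q),
    setIntegral_congr_fun measurableSet_Ioi (eqOn_Ioi p q),
    integral_exp_mul_complex_Iic hq, integral_exp_mul_complex_Ioi (by simpa using hp)]
  simp [neg_div_neg_eq, add_comm]

theorem fourier_apply (hp : 0 < p.re) (hq : 0 < q.re) (w : ℝ) :
    𝓕 (twoSidedExp p q) w =
      (p + 2 * Real.pi * Complex.I * w)⁻¹ + (q - 2 * Real.pi * Complex.I * w)⁻¹ := by
  rw [Real.fourier_real_eq_integral_exp_smul,
    ← integral_eq (by simpa using hp) (by simpa using hq)]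
  congr 1 with t
  rw [← exp_mul_apply, smul_eq_mul]
  push_cast
  ring_nf

end twoSidedExp

/-- The product of simple fractions `(p + 2πiw)⁻¹ (q - 2πiw)⁻¹`, a multiple of the Fourier transform
of `twoSidedExp p q`. -/
noncomputable def twoPoleKernel (p q : ℂ) (w : ℝ) : ℂ :=
  (p + 2 * Real.pi * Complex.I * w)⁻¹ * (q - 2 * Real.pi * Complex.I * w)⁻¹

theorem memLp_two_inv_add_two_pi_mul_I {p : ℂ} (hp : p.re ≠ 0) :
    MemLp (fun w : ℝ ↦ (p + 2 * Real.pi * Complex.I * w)⁻¹) 2 := by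
  have hne (w : ℝ) : p + 2 * Real.pi * Complex.I * w ≠ 0 := fun h ↦
    hp (by simpa using congrArg Complex.re h)
  have hcont : Continuous fun w : ℝ ↦ (p + 2 * Real.pi * Complex.I * w)⁻¹ :=
    Continuous.inv₀ (by fun_prop) hne
  rw [memLp_two_iff_integrable_sq_norm hcont.aestronglyMeasurable]
  have hint : Integrable fun w : ℝ ↦
      (p.re ^ 2)⁻¹ * (1 + ((p.im + 2 * Real.pi * w) / p.re) ^ 2)⁻¹ :=
    (((integrable_inv_one_add_sq.comp_div hp).comp_add_left p.im).comp_mul_left'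
      Real.two_pi_pos.ne').const_mul _
  refine hint.congr (.of_forall fun w ↦ ?_)
  have hnorm : ‖p + 2 * Real.pi * Complex.I * w‖ ^ 2 =
      p.re ^ 2 + (p.im + 2 * Real.pi * w) ^ 2 := by
    rw [← Complex.normSq_eq_norm_sq, Complex.normSq_apply]
    simp [sq]
  simp only [norm_inv, inv_pow, hnorm]
  field_simp

namespace twoPoleKernel

variable {p q : ℂ}

theorem integrable (hp : p.re ≠ 0) (hq : q.re ≠ 0) : Integrable (twoPoleKernel p q) := by
  have hq' := (memLp_two_inv_add_two_pi_mul_I hq).comp_measurePreserving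
    (Measure.measurePreserving_neg volume)
  refine ((memLp_two_inv_add_two_pi_mul_I hp).integrable_mul hq').congr (.of_forall fun w ↦ ?_)
  simp [twoPoleKernel, sub_eq_add_neg]

theorem eq_smul_fourier_twoSidedExp (hp : 0 < p.re) (hq : 0 < q.re) :
    twoPoleKernel p q = (p + q)⁻¹ • 𝓕 (twoSidedExp p q) := by
  ext w
  have hpw : p + 2 * Real.pi * Complex.I * w ≠ 0 :=
    Complex.ne_zero_of_re_pos (by simpa using hp)
  have hqw : q - 2 * Real.pi * Complex.I * w ≠ 0 :=
    Complex.ne_zero_of_re_pos (by simpa using hq)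
  have hpq : p + q ≠ 0 := Complex.ne_zero_of_re_pos (by simpa using add_pos hp hq)
  rw [Pi.smul_apply, smul_eq_mul, twoSidedExp.fourier_apply hp hq, twoPoleKernel]
  field_simp
  ring

theorem fourier_apply (hp : 0 < p.re) (hq : 0 < q.re) (t : ℝ) :
    𝓕 (twoPoleKernel p q) t = (p + q)⁻¹ * twoSidedExp q p t := by
  have hpq : p + q ≠ 0 := Complex.ne_zero_of_re_pos (by simpa using add_pos hp hq)
  have hfourier : 𝓕 (twoSidedExp p q) = (p + q) • twoPoleKernel p q := by
    rw [eq_smul_fourier_twoSidedExp hp hq, smul_inv_smul₀ hpq]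
  have hint : Integrable (𝓕 (twoSidedExp p q)) :=
    hfourier ▸ (integrable hp.ne' hq.ne').smul (p + q)
  have hinv : 𝓕⁻ (𝓕 (twoSidedExp p q)) (-t) = twoSidedExp p q (-t) :=
    congrFun ((twoSidedExp.continuous p q).fourierInv_fourier_eq
      (twoSidedExp.integrable hp hq) hint) (-t)
  have hsmul : 𝓕 ((p + q) • twoPoleKernel p q) = (p + q) • 𝓕 (twoPoleKernel p q) :=
    VectorFourier.fourierIntegral_const_smul _ _ _ _ _
  rw [eq_inv_mul_iff_mul_eq₀ hpq, ← twoSidedExp.apply_neg, ← hinv, hfourier,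
    Real.fourierInv_eq_fourier_neg, neg_neg, hsmul, Pi.smul_apply, smul_eq_mul]

theorem integral_sum_mul_prod {ι : Type*} [Fintype ι] {a b : ι → ℂ} (hp : 0 < p.re)
    (hq : 0 < q.re) (ha : ∀ i, 0 < (a i).re) (hb : ∀ i, 0 < (b i).re) :
    ∫ w : ι → ℝ, twoPoleKernel p q (∑ i, w i) * ∏ i, twoPoleKernel (a i) (b i) (w i) =
      ((p + ∑ i, b i)⁻¹ + (q + ∑ i, a i)⁻¹) / ((p + q) * ∏ i, (a i + b i)) := by
  have hpb : 0 < (p + ∑ i, b i).re := by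
    simpa using add_pos_of_pos_of_nonneg hp (Finset.sum_nonneg fun i _ ↦ (hb i).le)
  have hqa : 0 < (q + ∑ i, a i).re := by
    simpa using add_pos_of_pos_of_nonneg hq (Finset.sum_nonneg fun i _ ↦ (ha i).le)
  calc
    _ = (p + q)⁻¹ * ∫ w : ι → ℝ,
          𝓕 (twoSidedExp p q) (∑ i, w i) * ∏ i, twoPoleKernel (a i) (b i) (w i) := by
      simp_rw [eq_smul_fourier_twoSidedExp hp hq, Pi.smul_apply, smul_eq_mul, mul_assoc,
        integral_const_mul]
    _ = (p + q)⁻¹ * ∫ t, twoSidedExp p q t * ∏ i, 𝓕 (twoPoleKernel (a i) (b i)) t := by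
      rw [integral_fourier_sum_mul_prod (twoSidedExp.integrable hp hq)
        fun i ↦ integrable (ha i).ne' (hb i).ne']
    _ = (p + q)⁻¹ * ∫ t, (∏ i, (a i + b i)⁻¹) *
          twoSidedExp (p + ∑ i, b i) (q + ∑ i, a i) t := by
      congr 2 with t
      rw [Finset.prod_congr rfl fun i _ ↦ fourier_apply (ha i) (hb i) t, Finset.prod_mul_distrib,
        twoSidedExp.prod_apply, mul_left_comm, twoSidedExp.apply_mul_apply]
    _ = _ := by
      rw [integral_const_mul, twoSidedExp.integral_eq hpb hqa, Finset.prod_inv_distrib,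
        ← mul_assoc, ← mul_inv, inv_mul_eq_div]

theorem integral_add_mul_mul {a b a' b' : ℂ} (hp : 0 < p.re) (hq : 0 < q.re) (ha : 0 < a.re)
    (hb : 0 < b.re) (ha' : 0 < a'.re) (hb' : 0 < b'.re) :
    ∫ w : ℝ × ℝ, twoPoleKernel p q (w.1 + w.2) *
        (twoPoleKernel a b w.1 * twoPoleKernel a' b' w.2) =
      ((p + (b + b'))⁻¹ + (q + (a + a'))⁻¹) / ((p + q) * ((a + b) * (a' + b'))) := by
  rw [← (volume_preserving_finTwoArrow ℝ).integral_comp']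
  simpa [MeasurableEquiv.finTwoArrow] using
    integral_sum_mul_prod (a := ![a, a']) (b := ![b, b']) hp hq
      (Fin.forall_fin_two.mpr ⟨ha, ha'⟩) (Fin.forall_fin_two.mpr ⟨hb, hb'⟩)

end twoPoleKernel

theorem prod_inv_add_I_mul_two_pi_smul (s : Fin 6 → ℂ) (w : ℝ × ℝ) :
    ∏ j, (s j + Complex.I * ((((2 * Real.pi) • w).1 * gammaOne j +
        ((2 * Real.pi) • w).2 * gammaTwo j : ℝ) : ℂ))⁻¹ =
      twoPoleKernel (s 0) (s 5) (w.1 + w.2) *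
        (twoPoleKernel (s 4) (s 1) w.1 * twoPoleKernel (s 3) (s 2) w.2) := by
  simp only [Fin.prod_univ_six, gammaOne, gammaTwo, twoPoleKernel, Fin.isValue, Prod.smul_fst,
    Prod.smul_snd, smul_eq_mul, Matrix.cons_val, mul_one, mul_zero, mul_neg, add_zero, zero_add,
    Complex.ofReal_add, Complex.ofReal_mul, Complex.ofReal_neg, Complex.ofReal_ofNat,
    Complex.ofReal_one, Complex.ofReal_zero]
  ring

/-- the X-function of the cone of effective divisors of the split toric
Del Pezzo surface of degree 6, computed via
`X_{Λ_eff}(ψ(s)) = (2π)^{-2} ∫_{M_ℝ} ∏_j (s_j + i y_j)^{-1} dy`, where `M_ℝ` is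
parametrized by `(a,b) ↦ a·γ₁ + b·γ₂` (normalizing the measure by the lattice `M`),
equals the stated rational function. -/
theorem XFunction_delPezzo_degree_six (s : Fin 6 → ℂ) (hs : ∀ i, 0 < (s i).re) :
    ((1 / (2 * Real.pi) ^ 2 : ℝ) : ℂ) *
      ∫ y : ℝ × ℝ, ∏ j, (s j + Complex.I * ((y.1 * gammaOne j + y.2 * gammaTwo j : ℝ) : ℂ))⁻¹
    = (s 0 + s 1 + s 2 + s 3 + s 4 + s 5) /
        ((s 0 + s 5) * (s 1 + s 4) * (s 2 + s 3) * (s 0 + s 1 + s 2) *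
          (s 3 + s 4 + s 5)) := by
  let F (y : ℝ × ℝ) : ℂ :=
    ∏ j, (s j + Complex.I * ((y.1 * gammaOne j + y.2 * gammaTwo j : ℝ) : ℂ))⁻¹
  have add_add_ne_zero (i j k : Fin 6) : s i + (s j + s k) ≠ 0 :=
    Complex.ne_zero_of_re_pos (by simpa using add_pos (hs i) (add_pos (hs j) (hs k)))
  calc
    _ = ∫ w, F ((2 * Real.pi) • w) := by
      rw [Measure.integral_comp_smul_of_nonneg _ _ _ (hR := Real.two_pi_pos.le)]
      simp [F]
    _ = ∫ w : ℝ × ℝ, twoPoleKernel (s 0) (s 5) (w.1 + w.2) *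
          (twoPoleKernel (s 4) (s 1) w.1 * twoPoleKernel (s 3) (s 2) w.2) := by
      simp_rw [F, prod_inv_add_I_mul_two_pi_smul]
    _ = ((s 0 + (s 1 + s 2))⁻¹ + (s 5 + (s 4 + s 3))⁻¹) /
          ((s 0 + s 5) * ((s 4 + s 1) * (s 3 + s 2))) :=
      twoPoleKernel.integral_add_mul_mul (hs 0) (hs 5) (hs 4) (hs 1) (hs 3) (hs 2)
    _ = _ := by
      rw [inv_add_inv (add_add_ne_zero 0 1 2) (add_add_ne_zero 5 4 3), div_div]
      ring
end

section
/- Let Λ_eff ⊂ ℝ^k be a full-dimensional finitely generated rational polyhedral cone with Λ_eff ∩ (−Λ_eff) = {0}, and let κ be a point in the interior of Λ_eff. Then α := X_{Λ_eff}(κ) = ∫_{Λ_eff^*} e^{-⟨κ,y⟩} dy is a positive rational number times the covolume normalization, i.e., if κ and the generators of Λ_eff are rational, then α ∈ ℚ_{>0}. -/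
open MeasureTheory

/-!
Since the cone is salient its dual has interior, and since `κ` is interior `⟨κ, ·⟩` is coercive on
the dual cone. Writing `e^{-⟨κ, y⟩}` as the integral of `e^{-t}` over `t ≥ ⟨κ, y⟩` and using Tonelli
and homogeneity, the integral is `k!` times the volume of the polytope `{y ∈ Λ* | ⟨κ, y⟩ ≤ 1}`,
whose facets have coefficients in any field `F` containing the coordinates of `κ` and of the
generators of the cone.

A bounded polyhedron over `F` has its volume in `F`: its indicator is piecewise polynomial over `F`,
and integrating out one coordinate `t` over an interval with endpoints in `F` preserves this class,
because along each fibre such a function is a spline in `t` whose knots are affine and whose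
coefficients are piecewise polynomial in the remaining coordinates.
-/

section PiecewisePolynomials

variable (F : Subfield ℝ) (k : ℕ)

/-- The affine functions on `ℝ^k` with coefficients in the field `F`; they define the half-spaces of
the polyhedra over `F` and serve as knots of splines. -/
noncomputable def affineFunctions : Submodule F ((Fin k → ℝ) → ℝ) :=
  Submodule.span F (insert 1 (Set.range fun i y => y i))

/-- The piecewise polynomial functions on `ℝ^k` defined over `F`: the algebra generated by the
affine functions and the indicators of the closed half-spaces with coefficients in `F`. They are
stable under integrating out a coordinate over an interval with endpoints in `F`. -/
noncomputable def piecewisePolynomials : Subalgebra F ((Fin k → ℝ) → ℝ) :=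
  Algebra.adjoin F (affineFunctions F k ∪
    (fun l : (Fin k → ℝ) → ℝ => {y | 0 ≤ l y}.indicator 1) '' affineFunctions F k)

/-- The functions `φ y t` that are sums of terms `c y * (t ^ n * 1_{l y ≤ t})` with `c` piecewise
polynomial and `l` affine. In the fibre coordinate `t` they are splines with knots `l y`, and they
serve as a normal form for piecewise polynomial functions on `ℝ^(k+1)` restricted to a fibre. -/
noncomputable def fiberSplines : Submodule F ((Fin k → ℝ) → ℝ → ℝ) :=
  Submodule.span F {φ | ∃ c ∈ piecewisePolynomials F k, ∃ n : ℕ, ∃ l ∈ affineFunctions F k,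
    φ = fun y t => c y * (Set.Ici (l y)).indicator (fun t => t ^ n) t}

variable {F k} {l l' : (Fin k → ℝ) → ℝ} {f f' : (Fin k → ℝ) → ℝ} {a b c : ℝ}

lemma const_mem_affineFunctions (hc : c ∈ F) : (fun _ => c) ∈ affineFunctions F k := by
  have h := (affineFunctions F k).smul_mem ⟨c, hc⟩ (Submodule.subset_span (Set.mem_insert 1 _))
  convert h using 1
  ext y
  simp [Subfield.smul_def]

lemma dotProduct_mem_affineFunctions {v : Fin k → ℝ} (hv : ∀ i, v i ∈ F) :
    (fun y => v ⬝ᵥ y) ∈ affineFunctions F k := by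
  have h : ∑ i, (⟨v i, hv i⟩ : F) • (fun y : Fin k → ℝ => y i) ∈ affineFunctions F k :=
    Submodule.sum_mem _ fun i _ => Submodule.smul_mem _ _
      (Submodule.subset_span (Set.mem_insert_of_mem _ ⟨i, rfl⟩))
  convert h using 1
  ext y
  simp [dotProduct, Subfield.smul_def]

lemma continuous_of_mem_affineFunctions (hl : l ∈ affineFunctions F k) : Continuous l := by
  induction hl using Submodule.span_induction with
  | mem l hl =>
    rcases hl with rfl | ⟨i, rfl⟩
    · exact continuous_one
    · exact continuous_apply i
  | zero => exact continuous_zero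
  | add _ _ _ _ h h' => exact h.add h'
  | smul c _ _ h => exact h.const_smul c

lemma exists_affineFunctions_cons_eq {l : (Fin (k + 1) → ℝ) → ℝ}
    (hl : l ∈ affineFunctions F (k + 1)) :
    ∃ a ∈ F, ∃ l₀ ∈ affineFunctions F k, ∀ y t, l (Fin.cons t y) = a * t + l₀ y := by
  induction hl using Submodule.span_induction with
  | mem l hl =>
    rcases hl with rfl | ⟨i, rfl⟩
    · exact ⟨0, F.zero_mem, 1, Submodule.subset_span (Set.mem_insert 1 _), by simp⟩
    · refine Fin.cases ?_ (fun j => ?_) i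
      · exact ⟨1, F.one_mem, 0, Submodule.zero_mem _, by simp⟩
      · exact ⟨0, F.zero_mem, fun y => y j,
          Submodule.subset_span (Set.mem_insert_of_mem _ ⟨j, rfl⟩), by simp⟩
  | zero => exact ⟨0, F.zero_mem, 0, Submodule.zero_mem _, by simp⟩
  | add l l' _ _ h h' =>
    obtain ⟨a, ha, l₀, hl₀, hl⟩ := h
    obtain ⟨a', ha', l₀', hl₀', hl'⟩ := h'
    refine ⟨a + a', F.add_mem ha ha', l₀ + l₀', Submodule.add_mem _ hl₀ hl₀', fun y t => ?_⟩
    simp only [Pi.add_apply, hl, hl']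
    ring
  | smul c l _ h =>
    obtain ⟨a, ha, l₀, hl₀, hl⟩ := h
    refine ⟨c * a, F.mul_mem c.2 ha, c • l₀, Submodule.smul_mem _ c hl₀, fun y t => ?_⟩
    simp only [Pi.smul_apply, hl, Subfield.smul_def, smul_eq_mul]
    ring

lemma mem_piecewisePolynomials_of_mem_affineFunctions (hl : l ∈ affineFunctions F k) :
    l ∈ piecewisePolynomials F k :=
  Algebra.subset_adjoin (Or.inl hl)

lemma const_mem_piecewisePolynomials (hc : c ∈ F) :
    (fun _ => c) ∈ piecewisePolynomials F k :=
  mem_piecewisePolynomials_of_mem_affineFunctions (const_mem_affineFunctions hc)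

lemma indicator_nonneg_mem_piecewisePolynomials (hl : l ∈ affineFunctions F k) :
    {y | 0 ≤ l y}.indicator 1 ∈ piecewisePolynomials F k :=
  Algebra.subset_adjoin (Or.inr ⟨l, hl, rfl⟩)

lemma ite_le_mem_piecewisePolynomials (hl : l ∈ affineFunctions F k)
    (hl' : l' ∈ affineFunctions F k) (hf : f ∈ piecewisePolynomials F k)
    (hf' : f' ∈ piecewisePolynomials F k) :
    (fun y => if l y ≤ l' y then f y else f' y) ∈ piecewisePolynomials F k := by
  have hd := indicator_nonneg_mem_piecewisePolynomials (Submodule.sub_mem _ hl' hl)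
  convert add_mem (mul_mem hd hf) (mul_mem (sub_mem (one_mem _) hd) hf') using 1
  ext y
  by_cases h : l y ≤ l' y <;> simp [h]

lemma clamp_mem_piecewisePolynomials (ha : a ∈ F) (hb : b ∈ F) (hab : a ≤ b)
    (hl : l ∈ affineFunctions F k) :
    (fun y => max a (min (l y) b)) ∈ piecewisePolynomials F k := by
  have hmem := ite_le_mem_piecewisePolynomials hl (const_mem_affineFunctions ha)
    (const_mem_piecewisePolynomials ha) (ite_le_mem_piecewisePolynomials hl
      (const_mem_affineFunctions hb) (mem_piecewisePolynomials_of_mem_affineFunctions hl)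
      (const_mem_piecewisePolynomials hb))
  convert hmem using 2 with y
  grind

lemma measurable_of_mem_piecewisePolynomials (hf : f ∈ piecewisePolynomials F k) :
    Measurable f := by
  induction hf using Algebra.adjoin_induction with
  | mem f hf =>
    rcases hf with hl | ⟨l, hl, rfl⟩
    · exact (continuous_of_mem_affineFunctions hl).measurable
    · exact measurable_one.indicator
        (measurableSet_le measurable_const (continuous_of_mem_affineFunctions hl).measurable)
  | algebraMap c => exact measurable_const
  | add _ _ _ _ h h' => exact h.add h'
  | mul _ _ _ _ h h' => exact h.mul h'

lemma exists_norm_le_of_mem_piecewisePolynomials (hf : f ∈ piecewisePolynomials F k)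
    {s : Set (Fin k → ℝ)} (hs : Bornology.IsBounded s) : ∃ B, ∀ y ∈ s, ‖f y‖ ≤ B := by
  induction hf using Algebra.adjoin_induction with
  | mem f hf =>
    rcases hf with hl | ⟨l, -, rfl⟩
    · obtain ⟨B, hB⟩ := hs.isCompact_closure.exists_bound_of_continuousOn
        (continuous_of_mem_affineFunctions hl).continuousOn
      exact ⟨B, fun y hy => hB y (subset_closure hy)⟩
    · exact ⟨1, fun y _ => (norm_indicator_le_norm_self _ y).trans (by simp)⟩
  | algebraMap c => exact ⟨‖(c : ℝ)‖, fun _ _ => le_rfl⟩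
  | add f f' _ _ h h' =>
    obtain ⟨B, hB⟩ := h
    obtain ⟨B', hB'⟩ := h'
    exact ⟨B + B', fun y hy => (norm_add_le _ _).trans (add_le_add (hB y hy) (hB' y hy))⟩
  | mul f f' _ _ h h' =>
    obtain ⟨B, hB⟩ := h
    obtain ⟨B', hB'⟩ := h'
    exact ⟨B * B', fun y hy => (norm_mul_le _ _).trans
      (mul_le_mul (hB y hy) (hB' y hy) (norm_nonneg _) ((norm_nonneg _).trans (hB y hy)))⟩

lemma apply_mem_subfield_of_mem_piecewisePolynomials (hf : f ∈ piecewisePolynomials F k)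
    {y : Fin k → ℝ} (hy : ∀ i, y i ∈ F) : f y ∈ F := by
  have haffine {l : (Fin k → ℝ) → ℝ} (hl : l ∈ affineFunctions F k) : l y ∈ F := by
    induction hl using Submodule.span_induction with
    | mem l hl =>
      rcases hl with rfl | ⟨i, rfl⟩
      · exact F.one_mem
      · exact hy i
    | zero => exact F.zero_mem
    | add _ _ _ _ h h' => exact F.add_mem h h'
    | smul c _ _ h => exact F.mul_mem c.2 h
  induction hf using Algebra.adjoin_induction with
  | mem f hf =>
    rcases hf with hl | ⟨l, -, rfl⟩
    · exact haffine hl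
    · by_cases h : 0 ≤ l y <;> simp [h]
  | algebraMap c => exact c.2
  | add _ _ _ _ h h' => exact F.add_mem h h'
  | mul _ _ _ _ h h' => exact F.mul_mem h h'

lemma mul_indicator_mem_fiberSplines {c : (Fin k → ℝ) → ℝ} (hc : c ∈ piecewisePolynomials F k)
    (n : ℕ) (hl : l ∈ affineFunctions F k) :
    (fun y t => c y * (Set.Ici (l y)).indicator (fun t => t ^ n) t) ∈ fiberSplines F k :=
  Submodule.subset_span ⟨c, hc, n, l, hl, rfl⟩

/-- The product of two steps `1_{l ≤ t}` and `1_{l' ≤ t}` is the one of them with the larger knot;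
which one that is depends on `y` alone, through a piecewise polynomial factor. -/
lemma mul_mem_fiberSplines {φ ψ : (Fin k → ℝ) → ℝ → ℝ} (hφ : φ ∈ fiberSplines F k)
    (hψ : ψ ∈ fiberSplines F k) : φ * ψ ∈ fiberSplines F k := by
  suffices h : fiberSplines F k * fiberSplines F k ≤ fiberSplines F k from
    h (Submodule.mul_mem_mul hφ hψ)
  rw [fiberSplines, Submodule.span_mul_span, Submodule.span_le]
  rintro _ ⟨_, ⟨c, hc, n, l, hl, rfl⟩, _, ⟨c', hc', n', l', hl', rfl⟩, rfl⟩
  have hcc' := mul_mem hc hc'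
  have h := mul_indicator_mem_fiberSplines
    (ite_le_mem_piecewisePolynomials hl' hl hcc' (zero_mem _)) (n + n') hl
  have h' := mul_indicator_mem_fiberSplines
    (ite_le_mem_piecewisePolynomials hl' hl (zero_mem _) hcc') (n + n') hl'
  change _ * _ ∈ fiberSplines F k
  convert add_mem h h' using 1
  ext y t
  simp only [Pi.mul_apply, Pi.add_apply, Pi.zero_apply, Set.indicator_apply, Set.mem_Ici]
  grind

lemma setIntegral_Ioc_indicator_Ici (hab : a ≤ b) (c : ℝ) (f : ℝ → ℝ) :
    ∫ t in Set.Ioc a b, (Set.Ici c).indicator f t = ∫ t in (max a (min c b))..b, f t := by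
  have hinter : Set.Ioc a b ∩ Set.Ioi c = Set.Ioc (max a (min c b)) b := by ext; grind
  rw [intervalIntegral.integral_of_le (by grind), ← hinter,
    ← setIntegral_indicator measurableSet_Ioi]
  exact integral_congr_ae (ae_restrict_of_ae (indicator_ae_eq_of_ae_eq_set Ioi_ae_eq_Ici.symm))

lemma integrableOn_Ioc_indicator_Ici_pow (a b c : ℝ) (n : ℕ) :
    IntegrableOn ((Set.Ici c).indicator fun t => t ^ n) (Set.Ioc a b) :=
  ((continuous_pow n).integrableOn_Ioc).indicator measurableSet_Ici

lemma integrableOn_Ioc_of_mem_fiberSplines {φ : (Fin k → ℝ) → ℝ → ℝ} (hφ : φ ∈ fiberSplines F k)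
    (a b : ℝ) (y : Fin k → ℝ) : IntegrableOn (φ y) (Set.Ioc a b) := by
  induction hφ using Submodule.span_induction with
  | mem φ hφ =>
    obtain ⟨c, -, n, l, -, rfl⟩ := hφ
    exact (integrableOn_Ioc_indicator_Ici_pow a b (l y) n).const_mul (c y)
  | zero => exact integrableOn_zero
  | add _ _ _ _ h h' => exact h.add h'
  | smul c _ _ h => exact h.const_mul (c : ℝ)

lemma setIntegral_Ioc_indicator_pow_mem_piecewisePolynomials (ha : a ∈ F) (hb : b ∈ F) (hab : a ≤ b)
    (hl : l ∈ affineFunctions F k) (n : ℕ) :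
    (fun y => ∫ t in Set.Ioc a b, (Set.Ici (l y)).indicator (fun t => t ^ n) t) ∈
      piecewisePolynomials F k := by
  have hb' : (fun _ => b ^ (n + 1)) ∈ piecewisePolynomials F k :=
    const_mem_piecewisePolynomials (F.pow_mem hb _)
  have hn : (fun _ => ((n + 1 : ℕ) : ℝ)⁻¹) ∈ piecewisePolynomials F k :=
    const_mem_piecewisePolynomials (F.inv_mem (natCast_mem F _))
  have hclamp := pow_mem (clamp_mem_piecewisePolynomials ha hb hab hl) (n + 1)
  convert mul_mem (sub_mem hb' hclamp) hn using 1
  ext y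
  rw [setIntegral_Ioc_indicator_Ici hab, integral_pow]
  simp [div_eq_mul_inv]

lemma setIntegral_Ioc_mem_piecewisePolynomials_of_mem_fiberSplines (ha : a ∈ F) (hb : b ∈ F)
    (hab : a ≤ b) {φ : (Fin k → ℝ) → ℝ → ℝ} (hφ : φ ∈ fiberSplines F k) :
    (fun y => ∫ t in Set.Ioc a b, φ y t) ∈ piecewisePolynomials F k := by
  induction hφ using Submodule.span_induction with
  | mem φ hφ =>
    obtain ⟨c, hc, n, l, hl, rfl⟩ := hφ
    simp only [integral_const_mul]
    exact mul_mem hc (setIntegral_Ioc_indicator_pow_mem_piecewisePolynomials ha hb hab hl n)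
  | zero =>
    simp only [Pi.zero_apply, integral_zero]
    exact zero_mem _
  | add φ ψ hφ hψ h h' =>
    convert add_mem h h' using 1
    ext y
    exact integral_add (integrableOn_Ioc_of_mem_fiberSplines hφ a b y)
      (integrableOn_Ioc_of_mem_fiberSplines hψ a b y)
  | smul c φ _ h =>
    convert (piecewisePolynomials F k).smul_mem h c using 1
    ext y
    exact integral_const_mul (c : ℝ) _

lemma exists_fiberSplines_ae_eq_mul_pow (ha : a ∈ F) (b : ℝ) {c : (Fin k → ℝ) → ℝ}
    (hc : c ∈ piecewisePolynomials F k) (n : ℕ) :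
    ∃ φ ∈ fiberSplines F k, ∀ y,
      (fun t => c y * t ^ n) =ᵐ[volume.restrict (Set.Ioc a b)] φ y := by
  -- On `(a, b]` the step with knot `a` is the constant `1`.
  refine ⟨_, mul_indicator_mem_fiberSplines hc n (const_mem_affineFunctions ha), fun y => ?_⟩
  filter_upwards [ae_restrict_mem measurableSet_Ioc] with t ht
  rw [Set.indicator_of_mem (Set.mem_Ici.2 ht.1.le)]

lemma exists_fiberSplines_ae_eq_of_affine (ha : a ∈ F) (b : ℝ) {l : (Fin (k + 1) → ℝ) → ℝ}
    (hl : l ∈ affineFunctions F (k + 1)) :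
    ∃ φ ∈ fiberSplines F k, ∀ y,
      (fun t => l (Fin.cons t y)) =ᵐ[volume.restrict (Set.Ioc a b)] φ y := by
  obtain ⟨p, hp, l₀, hl₀, hcons⟩ := exists_affineFunctions_cons_eq hl
  obtain ⟨φ, hφ, hφ_eq⟩ :=
    exists_fiberSplines_ae_eq_mul_pow ha b (const_mem_piecewisePolynomials (k := k) hp) 1
  obtain ⟨ψ, hψ, hψ_eq⟩ :=
    exists_fiberSplines_ae_eq_mul_pow ha b (mem_piecewisePolynomials_of_mem_affineFunctions hl₀) 0
  refine ⟨φ + ψ, add_mem hφ hψ, fun y => ?_⟩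
  filter_upwards [hφ_eq y, hψ_eq y] with t ht ht'
  simpa [hcons] using congr_arg₂ (· + ·) ht ht'

/-- Along a fibre the half-space is a ray, everything or nothing, according to the sign of the
coefficient of `t`. -/
lemma exists_fiberSplines_ae_eq_of_halfSpace (ha : a ∈ F) (b : ℝ) {l : (Fin (k + 1) → ℝ) → ℝ}
    (hl : l ∈ affineFunctions F (k + 1)) :
    ∃ φ ∈ fiberSplines F k, ∀ y,
      (fun t => {z | 0 ≤ l z}.indicator 1 (Fin.cons t y)) =ᵐ[volume.restrict (Set.Ioc a b)]
        φ y := by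
  obtain ⟨p, hp, l₀, hl₀, hcons⟩ := exists_affineFunctions_cons_eq hl
  let knot : (Fin k → ℝ) → ℝ := fun y => -p⁻¹ * l₀ y
  have hknot : knot ∈ affineFunctions F k :=
    (affineFunctions F k).smul_mem ⟨-p⁻¹, F.neg_mem (F.inv_mem hp)⟩ hl₀
  have hstep := mul_indicator_mem_fiberSplines (one_mem (piecewisePolynomials F k)) 0 hknot
  have hfactor (hp0 : p ≠ 0) (y : Fin k → ℝ) (t : ℝ) : l (Fin.cons t y) = p * (t - knot y) := by
    rw [hcons]
    simp only [knot]
    field_simp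
    ring
  rcases lt_trichotomy p 0 with hneg | rfl | hpos
  · obtain ⟨φ, hφ, hφ_eq⟩ :=
      exists_fiberSplines_ae_eq_mul_pow ha b (one_mem (piecewisePolynomials F k)) 0
    refine ⟨_, sub_mem hφ hstep, fun y => ?_⟩
    filter_upwards [hφ_eq y, Measure.ae_ne _ (knot y)] with t ht hne
    have hsign : 0 ≤ l (Fin.cons t y) ↔ ¬ knot y ≤ t := by
      rw [hfactor hneg.ne, ← neg_mul_neg, mul_nonneg_iff_of_pos_left (neg_pos.2 hneg),
        neg_nonneg, sub_nonpos, not_le, hne.le_iff_lt]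
    by_cases h : knot y ≤ t <;> simp [← ht, hsign, Set.indicator_apply, h]
  · obtain ⟨φ, hφ, hφ_eq⟩ :=
      exists_fiberSplines_ae_eq_mul_pow ha b (indicator_nonneg_mem_piecewisePolynomials hl₀) 0
    refine ⟨φ, hφ, fun y => ?_⟩
    simpa [Set.indicator_apply, hcons] using hφ_eq y
  · refine ⟨_, hstep, fun y => .of_forall fun t => ?_⟩
    simp [hfactor hpos.ne', mul_nonneg_iff_of_pos_left hpos, Set.indicator_apply]

lemma exists_fiberSplines_ae_eq (ha : a ∈ F) (b : ℝ) {f : (Fin (k + 1) → ℝ) → ℝ}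
    (hf : f ∈ piecewisePolynomials F (k + 1)) :
    ∃ φ ∈ fiberSplines F k, ∀ y,
      (fun t => f (Fin.cons t y)) =ᵐ[volume.restrict (Set.Ioc a b)] φ y := by
  induction hf using Algebra.adjoin_induction with
  | mem f hf =>
    rcases hf with hl | ⟨l, hl, rfl⟩
    · exact exists_fiberSplines_ae_eq_of_affine ha b hl
    · exact exists_fiberSplines_ae_eq_of_halfSpace ha b hl
  | algebraMap c =>
    exact exists_fiberSplines_ae_eq_of_affine ha b (const_mem_affineFunctions c.2)
  | add _ _ _ _ h h' =>
    obtain ⟨φ, hφ, hφ_eq⟩ := h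
    obtain ⟨ψ, hψ, hψ_eq⟩ := h'
    exact ⟨φ + ψ, add_mem hφ hψ, fun y => (hφ_eq y).add (hψ_eq y)⟩
  | mul _ _ _ _ h h' =>
    obtain ⟨φ, hφ, hφ_eq⟩ := h
    obtain ⟨ψ, hψ, hψ_eq⟩ := h'
    exact ⟨φ * ψ, mul_mem_fiberSplines hφ hψ, fun y => (hφ_eq y).mul (hψ_eq y)⟩

lemma setIntegral_Ioc_cons_mem_piecewisePolynomials (ha : a ∈ F) (hb : b ∈ F) (hab : a ≤ b)
    {f : (Fin (k + 1) → ℝ) → ℝ} (hf : f ∈ piecewisePolynomials F (k + 1)) :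
    (fun y => ∫ t in Set.Ioc a b, f (Fin.cons t y)) ∈ piecewisePolynomials F k := by
  obtain ⟨φ, hφ, hφ_eq⟩ := exists_fiberSplines_ae_eq ha b hf
  simpa only [integral_congr_ae (hφ_eq _)] using
    setIntegral_Ioc_mem_piecewisePolynomials_of_mem_fiberSplines ha hb hab hφ

lemma volume_restrict_cube (k : ℕ) (s : Set ℝ) :
    volume.restrict (Set.univ.pi fun _ : Fin k => s) =
      Measure.pi fun _ : Fin k => volume.restrict s := by
  rw [volume_pi, Measure.restrict_pi_pi]

lemma integrableOn_of_mem_piecewisePolynomials (hf : f ∈ piecewisePolynomials F k)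
    {s : Set (Fin k → ℝ)} (hs : Bornology.IsBounded s) : IntegrableOn f s := by
  obtain ⟨B, hB⟩ := exists_norm_le_of_mem_piecewisePolynomials hf hs.closure
  have hclosure : IntegrableOn f (closure s) :=
    Measure.integrableOn_of_bounded hs.isCompact_closure.measure_lt_top.ne
      (measurable_of_mem_piecewisePolynomials hf).aestronglyMeasurable
      (ae_restrict_of_forall_mem measurableSet_closure hB)
  exact hclosure.mono_set subset_closure

lemma isBounded_cube (k : ℕ) (a b : ℝ) :
    Bornology.IsBounded (Set.univ.pi fun _ : Fin k => Set.Ioc a b) :=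
  Bornology.IsBounded.pi fun _ => Metric.isBounded_Ioc a b

theorem setIntegral_cube_mem_subfield (ha : a ∈ F) (hb : b ∈ F) (hab : a ≤ b)
    (hf : f ∈ piecewisePolynomials F k) :
    ∫ y in Set.univ.pi fun _ => Set.Ioc a b, f y ∈ F := by
  induction k with
  | zero =>
    rw [volume_restrict_cube, Measure.pi_of_empty _ default, integral_dirac]
    exact apply_mem_subfield_of_mem_piecewisePolynomials hf fun i => i.elim0
  | succ k ih =>
    have hmp := (measurePreserving_piFinSuccAbove
      (fun _ : Fin (k + 1) => volume.restrict (Set.Ioc a b)) 0).symm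
    have hint := integrableOn_of_mem_piecewisePolynomials hf (isBounded_cube (k + 1) a b)
    have hcube := ih (setIntegral_Ioc_cons_mem_piecewisePolynomials ha hb hab hf)
    rw [IntegrableOn, volume_restrict_cube] at hint
    rw [volume_restrict_cube] at hcube ⊢
    rw [← hmp.integral_comp (MeasurableEquiv.measurableEmbedding _), integral_prod_symm]
    · simpa [MeasurableEquiv.piFinSuccAbove, Fin.insertNthEquiv] using hcube
    · exact (hmp.integrable_comp_emb (MeasurableEquiv.measurableEmbedding _)).2 hint

theorem measureReal_polyhedron_mem_subfield {ι : Type*} [Finite ι] {l : ι → (Fin k → ℝ) → ℝ}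
    (hl : ∀ j, l j ∈ affineFunctions F k) (hbdd : Bornology.IsBounded {y | ∀ j, 0 ≤ l j y}) :
    volume.real {y | ∀ j, 0 ≤ l j y} ∈ F := by
  cases nonempty_fintype ι
  set P := {y | ∀ j, 0 ≤ l j y}
  have hP_ind : P.indicator 1 = ∏ j, {y | 0 ≤ l j y}.indicator (1 : (Fin k → ℝ) → ℝ) := by
    ext y
    simp [P, Set.indicator_apply, Finset.prod_ite_zero]
  have hP : P.indicator 1 ∈ piecewisePolynomials F k :=
    hP_ind ▸ prod_mem fun j _ => indicator_nonneg_mem_piecewisePolynomials (hl j)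
  have hPm : MeasurableSet P := by
    simp only [P, Set.ofPred_forall]
    exact .iInter fun j =>
      measurableSet_le measurable_const (continuous_of_mem_affineFunctions (hl j)).measurable
  obtain ⟨R, hR⟩ := hbdd.exists_norm_le
  obtain ⟨N, hN⟩ := exists_nat_gt R
  have hcube : P ⊆ Set.univ.pi fun _ => Set.Ioc (-(N : ℝ)) N := fun y hy i _ =>
    have hyi := abs_lt.1 ((norm_le_pi_norm y i).trans_lt ((hR y hy).trans_lt hN))
    ⟨hyi.1, hyi.2.le⟩
  have hmem := setIntegral_cube_mem_subfield (F.neg_mem (natCast_mem F N)) (natCast_mem F N)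
    (by linarith [N.cast_nonneg (α := ℝ)]) hP
  rwa [integral_indicator_one hPm, measureReal_restrict_apply hPm,
    Set.inter_eq_left.2 hcube] at hmem

end PiecewisePolynomials

section LaplaceTransformOfCone

lemma ofReal_exp_neg_eq_lintegral (a : ℝ) :
    ENNReal.ofReal (Real.exp (-a)) =
      ∫⁻ t, (Set.Ici a).indicator (fun t => ENNReal.ofReal (Real.exp (-t))) t := by
  rw [lintegral_indicator measurableSet_Ici, ← setLIntegral_congr Ioi_ae_eq_Ici,
    ← integral_exp_neg_Ioi a, ofReal_integral_eq_lintegral_ofReal (integrableOn_exp_neg_Ioi a)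
      (.of_forall fun _ => (Real.exp_pos _).le)]

lemma lintegral_exp_neg_mul_pow (n : ℕ) :
    ∫⁻ t in Set.Ioi (0 : ℝ), ENNReal.ofReal (Real.exp (-t) * t ^ n) = n.factorial := by
  have hn : (0 : ℝ) < n + 1 := by positivity
  have hΓ : IntegrableOn (fun t : ℝ => Real.exp (-t) * t ^ n) (Set.Ioi 0) := by
    simpa using Real.GammaIntegral_convergent hn
  have hnonneg : ∀ᵐ t ∂volume.restrict (Set.Ioi (0 : ℝ)), 0 ≤ Real.exp (-t) * t ^ n := by
    filter_upwards [ae_restrict_mem measurableSet_Ioi] with t (ht : 0 < t)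
    positivity
  rw [← ofReal_integral_eq_lintegral_ofReal hΓ hnonneg, ← ENNReal.ofReal_natCast,
    ← Real.Gamma_nat_eq_factorial, Real.Gamma_eq_integral hn]
  simp

variable {E : Type*} [NormedAddCommGroup E] [NormedSpace ℝ E] [FiniteDimensional ℝ E]
  [MeasurableSpace E] [BorelSpace E] (μ : Measure E) [μ.IsAddHaarMeasure] {C : Set E} {φ : E → ℝ}

open scoped Pointwise in
lemma addHaar_cone_inter_sublevel
    (hC : ∀ t : ℝ, 0 < t → ∀ y ∈ C, t • y ∈ C) (hφ : ∀ t : ℝ, 0 < t → ∀ y, φ (t • y) = t * φ y)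
    {t : ℝ} (ht : 0 < t) :
    μ (C ∩ {y | φ y ≤ t}) =
      ENNReal.ofReal (t ^ Module.finrank ℝ E) * μ (C ∩ {y | φ y ≤ 1}) := by
  have hscale : C ∩ {y | φ y ≤ t} = t • (C ∩ {y | φ y ≤ 1}) := by
    ext y
    have hmem : t⁻¹ • y ∈ C ↔ y ∈ C :=
      ⟨fun h => by simpa [ht.ne'] using hC t ht _ h, hC _ (inv_pos.2 ht) y⟩
    simp [Set.mem_smul_set_iff_inv_smul_mem₀ ht.ne', hmem, hφ _ (inv_pos.2 ht),
      inv_mul_le_iff₀ ht]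
  rw [hscale, Measure.addHaar_smul, abs_of_pos (pow_pos ht _)]

theorem lintegral_exp_neg_cone (hφm : Measurable φ)
    (hC : ∀ t : ℝ, 0 < t → ∀ y ∈ C, t • y ∈ C) (hφ : ∀ t : ℝ, 0 < t → ∀ y, φ (t • y) = t * φ y)
    (hφ_nonneg : ∀ y ∈ C, 0 ≤ φ y) :
    ∫⁻ y in C, ENNReal.ofReal (Real.exp (-φ y)) ∂μ =
      (Module.finrank ℝ E).factorial * μ (C ∩ {y | φ y ≤ 1}) := by
  set d := Module.finrank ℝ E
  have hsub (t : ℝ) : MeasurableSet {y | φ y ≤ t} := measurableSet_le hφm measurable_const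
  have hinner (t : ℝ) :
      ∫⁻ y in C, (Set.Ici (φ y)).indicator (fun t => ENNReal.ofReal (Real.exp (-t))) t ∂μ =
        ENNReal.ofReal (Real.exp (-t)) * μ (C ∩ {y | φ y ≤ t}) := by
    rw [Set.inter_comm, ← Measure.restrict_apply (hsub t), ← lintegral_indicator_const (hsub t)]
    rfl
  have hempty (t : ℝ) (ht : t < 0) : C ∩ {y | φ y ≤ t} = ∅ :=
    Set.eq_empty_of_forall_notMem fun y hy => (hy.2.trans_lt ht).not_ge (hφ_nonneg y hy.1)
  calc ∫⁻ y in C, ENNReal.ofReal (Real.exp (-φ y)) ∂μ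
      = ∫⁻ t, ∫⁻ y in C,
          (Set.Ici (φ y)).indicator (fun t => ENNReal.ofReal (Real.exp (-t))) t ∂μ := by
        simp_rw [ofReal_exp_neg_eq_lintegral (φ _)]
        refine lintegral_lintegral_swap (Measurable.aemeasurable ?_)
        exact Measurable.ite (measurableSet_le (hφm.comp measurable_fst) measurable_snd)
          (by fun_prop) measurable_const
    _ = ∫⁻ t, ENNReal.ofReal (Real.exp (-t)) * μ (C ∩ {y | φ y ≤ t}) := by simp_rw [hinner]
    _ = ∫⁻ t in Set.Ioi 0, ENNReal.ofReal (Real.exp (-t)) * μ (C ∩ {y | φ y ≤ t}) := by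
        rw [setLIntegral_congr Ioi_ae_eq_Ici, ← lintegral_indicator measurableSet_Ici]
        refine lintegral_congr fun t => ?_
        rcases lt_or_ge t 0 with ht | ht
        · rw [Set.indicator_of_notMem (by simpa using ht), hempty t ht, measure_empty, mul_zero]
        · rw [Set.indicator_of_mem (Set.mem_Ici.2 ht)]
    _ = ∫⁻ t in Set.Ioi 0, ENNReal.ofReal (Real.exp (-t) * t ^ d) * μ (C ∩ {y | φ y ≤ 1}) := by
        refine setLIntegral_congr_fun measurableSet_Ioi fun t ht => ?_
        rw [addHaar_cone_inter_sublevel μ hC hφ ht, ENNReal.ofReal_mul (Real.exp_pos _).le,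
          mul_assoc]
    _ = d.factorial * μ (C ∩ {y | φ y ≤ 1}) := by
        rw [lintegral_mul_const _ (by fun_prop), lintegral_exp_neg_mul_pow]

end LaplaceTransformOfCone

section Cones

lemma convex_sdiff_zero_of_salient {𝕜 E : Type*} [Field 𝕜] [LinearOrder 𝕜]
    [AddCommGroup E] [Module 𝕜 E] {C : ConvexCone 𝕜 E} (hC : C.Salient) :
    Convex 𝕜 ((C : Set E) \ {0}) := by
  rw [convex_iff_forall_pos]
  rintro x ⟨hx, hx0⟩ y ⟨hy, -⟩ a b ha hb -
  have hax : a • x ∈ C := C.smul_mem ha hx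
  have hby : b • y ∈ C := C.smul_mem hb hy
  refine ⟨C.add_mem hax hby, fun h => hC _ hax (smul_ne_zero ha.ne' hx0) ?_⟩
  rwa [neg_eq_of_add_eq_zero_right h]

lemma exists_strongDual_pos_of_salient {E : Type*} [AddCommGroup E] [Module ℝ E]
    [TopologicalSpace E] [IsTopologicalAddGroup E] [ContinuousSMul ℝ E] [LocallyConvexSpace ℝ E]
    [T2Space E] {C : ConvexCone ℝ E} (hC : C.Salient) {s : Set E} (hs : s.Finite) (hsC : s ⊆ C) :
    ∃ f : StrongDual ℝ E, ∀ x ∈ s, x ≠ 0 → 0 < f x := by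
  have hzero : (0 : E) ∉ convexHull ℝ (s \ {0}) := fun h =>
    (convexHull_min (Set.sdiff_subset_sdiff_left hsC) (convex_sdiff_zero_of_salient hC) h).2 rfl
  obtain ⟨f, u, hu, hf⟩ := geometric_hahn_banach_point_closed (convex_convexHull ℝ _)
    (hs.sdiff.isClosed_convexHull ℝ) hzero
  refine ⟨f, fun x hx hx0 => ?_⟩
  have hux : u < f x := hf x (subset_convexHull ℝ _ ⟨hx, hx0⟩)
  rw [map_zero] at hu
  exact hu.trans hux

lemma coe_hull_range {R E ι : Type*} [Semiring R] [PartialOrder R] [IsOrderedRing R]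
    [AddCommMonoid E] [Module R E] [Fintype ι] (g : ι → E) :
    (PointedCone.hull R (Set.range g) : Set E) =
      {x | ∃ c : ι → R, (∀ j, 0 ≤ c j) ∧ x = ∑ j, c j • g j} := by
  ext x
  rw [SetLike.mem_coe, Submodule.mem_span_range_iff_exists_fun]
  exact ⟨fun ⟨c, hc⟩ => ⟨fun j => c j, fun j => (c j).2, hc.symm⟩,
    fun ⟨c, hc, hx⟩ => ⟨fun j => ⟨c j, hc j⟩, hx.symm⟩⟩

variable {k : ℕ}

lemma dualCone_hull (s : Set (Fin k → ℝ)) :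
    dualCone (PointedCone.hull ℝ s) = {y | ∀ x ∈ s, 0 ≤ x ⬝ᵥ y} := by
  ext y
  refine ⟨fun hy x hx => hy x (PointedCone.subset_hull hx), fun hy x hx => ?_⟩
  change 0 ≤ x ⬝ᵥ y
  induction hx using Submodule.span_induction with
  | mem x hx => exact hy x hx
  | zero => simp
  | add x x' _ _ hx hx' => rw [add_dotProduct]; exact add_nonneg hx hx'
  | smul c x _ hx =>
    change 0 ≤ ((c : ℝ) • x) ⬝ᵥ y
    rw [smul_dotProduct]
    exact mul_nonneg c.2 hx

lemma smul_mem_dualCone {Λ : Set (Fin k → ℝ)} {y : Fin k → ℝ} (hy : y ∈ dualCone Λ) {t : ℝ}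
    (ht : 0 ≤ t) : t • y ∈ dualCone Λ := fun x hx => by
  change 0 ≤ x ⬝ᵥ (t • y)
  rw [dotProduct_smul]
  exact mul_nonneg ht (hy x hx)

lemma exists_pos_mul_norm_le_dotProduct {Λ : Set (Fin k → ℝ)} {κ : Fin k → ℝ}
    (hκ : κ ∈ interior Λ) : ∃ ε > 0, ∀ y ∈ dualCone Λ, ε * ‖y‖ ≤ κ ⬝ᵥ y := by
  obtain ⟨ε, hε, hball⟩ :=
    Metric.nhds_basis_closedBall.mem_iff.1 (mem_interior_iff_mem_nhds.1 hκ)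
  refine ⟨ε, hε, fun y hy => ?_⟩
  have hcoord (i : Fin k) (s : ℝ) (hs : |s| ≤ ε) : 0 ≤ κ ⬝ᵥ y + s * y i := by
    rw [← single_dotProduct, ← add_dotProduct]
    exact hy _ (hball (by simpa [Pi.norm_single] using hs))
  have hκy : 0 ≤ κ ⬝ᵥ y := hy κ (interior_subset hκ)
  rw [← le_div_iff₀' hε, pi_norm_le_iff_of_nonneg (by positivity)]
  intro i
  have hmul : ε * ‖y i‖ = |ε * y i| := by rw [abs_mul, abs_of_pos hε, Real.norm_eq_abs]
  rw [le_div_iff₀' hε, hmul, abs_le]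
  constructor <;> linarith [hcoord i ε (abs_of_pos hε).le,
    hcoord i (-ε) (by rw [abs_neg, abs_of_pos hε])]

lemma isBounded_dualCone_inter_sublevel {Λ : Set (Fin k → ℝ)} {κ : Fin k → ℝ}
    (hκ : κ ∈ interior Λ) (t : ℝ) :
    Bornology.IsBounded (dualCone Λ ∩ {y | κ ⬝ᵥ y ≤ t}) := by
  obtain ⟨ε, hε, hcoercive⟩ := exists_pos_mul_norm_le_dotProduct hκ
  refine isBounded_iff_forall_norm_le.2 ⟨t / ε, fun y hy => ?_⟩
  rw [le_div_iff₀' hε]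
  exact (hcoercive y hy.1).trans hy.2

lemma interior_dualCone_nonempty_of_salient {s : Set (Fin k → ℝ)} (hs : s.Finite)
    (hsal : (PointedCone.hull ℝ s).toConvexCone.Salient) :
    (interior (dualCone (PointedCone.hull ℝ s : Set (Fin k → ℝ)))).Nonempty := by
  obtain ⟨f, hf⟩ := exists_strongDual_pos_of_salient hsal hs PointedCone.subset_hull
  obtain ⟨y, hy⟩ := (dotProductEquiv ℝ (Fin k)).surjective f.toLinearMap
  have hfy (x : Fin k → ℝ) : x ⬝ᵥ y = f x := by
    rw [dotProduct_comm]; exact LinearMap.congr_fun hy x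
  refine ⟨y, interior_maximal (s := dualCone _) (t := ⋂ x ∈ s \ {0}, {y | 0 < x ⬝ᵥ y}) ?_
    (hs.sdiff.isOpen_biInter fun x _ => isOpen_lt continuous_const (by fun_prop)) ?_⟩
  · intro z hz
    rw [dualCone_hull]
    intro x hx
    rcases eq_or_ne x 0 with rfl | hx0
    · simp
    · exact (Set.mem_iInter₂.1 hz x ⟨hx, hx0⟩).le
  · exact Set.mem_iInter₂.2 fun x hx => (hf x hx.1 hx.2).trans_eq (hfy x).symm

lemma lintegral_exp_neg_dualCone {Λ : Set (Fin k → ℝ)} {κ : Fin k → ℝ} (hκ : κ ∈ Λ) :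
    ∫⁻ y in dualCone Λ, ENNReal.ofReal (Real.exp (-(κ ⬝ᵥ y))) =
      k.factorial * volume (dualCone Λ ∩ {y | κ ⬝ᵥ y ≤ 1}) := by
  simpa using lintegral_exp_neg_cone volume (C := dualCone Λ) (φ := (κ ⬝ᵥ ·)) (by fun_prop)
    (fun t ht y hy => smul_mem_dualCone hy ht.le) (fun t _ y => dotProduct_smul t κ y)
    (fun y hy => hy κ hκ)

lemma volume_dualCone_inter_sublevel_pos {Λ : Set (Fin k → ℝ)} {κ : Fin k → ℝ} (hκ : κ ∈ Λ)
    (hvol : 0 < volume (dualCone Λ)) : 0 < volume (dualCone Λ ∩ {y | κ ⬝ᵥ y ≤ 1}) := by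
  have hsupport : (fun y => ENNReal.ofReal (Real.exp (-(κ ⬝ᵥ y)))).support = Set.univ :=
    Set.eq_univ_of_forall fun y => (ENNReal.ofReal_pos.2 (Real.exp_pos _)).ne'
  have hpos : 0 < ∫⁻ y in dualCone Λ, ENNReal.ofReal (Real.exp (-(κ ⬝ᵥ y))) := by
    rwa [setLIntegral_pos_iff (by fun_prop), hsupport, Set.univ_inter]
  rw [lintegral_exp_neg_dualCone hκ] at hpos
  exact pos_of_mul_pos_right hpos zero_le

theorem integral_exp_neg_dualCone {Λ : Set (Fin k → ℝ)} {κ : Fin k → ℝ} (hκ : κ ∈ Λ) :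
    ∫ y in dualCone Λ, Real.exp (-(κ ⬝ᵥ y)) =
      k.factorial * volume.real (dualCone Λ ∩ {y | κ ⬝ᵥ y ≤ 1}) := by
  rw [integral_eq_lintegral_of_nonneg_ae (.of_forall fun _ => (Real.exp_pos _).le)
    (Measurable.aestronglyMeasurable (by fun_prop)), lintegral_exp_neg_dualCone hκ,
    ENNReal.toReal_mul, ENNReal.toReal_natCast, measureReal_def]

lemma measureReal_dualCone_hull_inter_sublevel_mem_subfield {F : Subfield ℝ} {ι : Type*} [Finite ι]
    {g : ι → Fin k → ℝ} (hg : ∀ j i, g j i ∈ F) {κ : Fin k → ℝ} (hκ : ∀ i, κ i ∈ F)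
    (hbdd : Bornology.IsBounded
      (dualCone (PointedCone.hull ℝ (Set.range g)) ∩ {y | κ ⬝ᵥ y ≤ 1})) :
    volume.real (dualCone (PointedCone.hull ℝ (Set.range g)) ∩ {y | κ ⬝ᵥ y ≤ 1}) ∈ F := by
  let l : Option ι → (Fin k → ℝ) → ℝ := fun j y => j.elim (1 - κ ⬝ᵥ y) (g · ⬝ᵥ y)
  have hl (j : Option ι) : l j ∈ affineFunctions F k := by
    cases j with
    | none =>
      exact sub_mem (const_mem_affineFunctions F.one_mem) (dotProduct_mem_affineFunctions hκ)
    | some j => exact dotProduct_mem_affineFunctions (hg j)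
  have hpolyhedron : dualCone (PointedCone.hull ℝ (Set.range g)) ∩ {y | κ ⬝ᵥ y ≤ 1} =
      {y | ∀ j, 0 ≤ l j y} := by
    ext y
    simp [dualCone_hull, l, Option.forall, and_comm]
  rw [hpolyhedron] at hbdd ⊢
  exact measureReal_polyhedron_mem_subfield hl hbdd

end Cones

theorem XFunction_rational_value_general {k : ℕ} {ι : Type*} [Fintype ι] (F : Subfield ℝ)
    {g : ι → Fin k → ℝ} (hg : ∀ j i, g j i ∈ F) {Λ : Set (Fin k → ℝ)}
    (hΛ : Λ = {x | ∃ c : ι → ℝ, (∀ j, 0 ≤ c j) ∧ x = ∑ j, c j • g j})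
    (hsal : Λ ∩ (-Λ) = {0}) {κ : Fin k → ℝ} (hκF : ∀ i, κ i ∈ F) (hκ : κ ∈ interior Λ) :
    0 < ∫ y in dualCone Λ, Real.exp (-∑ i, κ i * y i) ∧
      ∫ y in dualCone Λ, Real.exp (-∑ i, κ i * y i) ∈ F := by
  rw [← coe_hull_range] at hΛ
  subst hΛ
  have hbdd := isBounded_dualCone_inter_sublevel hκ 1
  have hκΛ := interior_subset hκ
  have hvol_pos := Measure.measure_pos_of_nonempty_interior volume
    (interior_dualCone_nonempty_of_salient (Set.finite_range g)
      ((PointedCone.salient_iff_inter_neg_eq_singleton _).2 hsal))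
  have htrunc_pos := ENNReal.toReal_pos (volume_dualCone_inter_sublevel_pos hκΛ hvol_pos).ne'
    hbdd.measure_lt_top.ne
  have hintegral := integral_exp_neg_dualCone hκΛ
  simp only [dotProduct] at hintegral
  rw [hintegral]
  exact ⟨mul_pos (Nat.cast_pos.2 k.factorial_pos) htrunc_pos,
    F.mul_mem (natCast_mem F _) (measureReal_dualCone_hull_inter_sublevel_mem_subfield hg hκF hbdd)⟩

/-- for a full-dimensional finitely generated *rational* polyhedral cone
`Λ_eff ⊆ ℝ^k` with `Λ_eff ∩ (−Λ_eff) = {0}` and a rational interior point `κ`, the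
value `α = X_{Λ_eff}(κ) = ∫_{Λ_eff^*} e^{-⟨κ,y⟩} dy` is a positive rational number. -/
theorem XFunction_rational_value (k n : ℕ) (hk : 0 < k) (g : Fin n → Fin k → ℚ)
    (Λ : Set (Fin k → ℝ))
    (hΛ : Λ = {x | ∃ c : Fin n → ℝ, (∀ j, 0 ≤ c j) ∧
      x = ∑ j, c j • fun i => ((g j i : ℝ))})
    (hsal : Λ ∩ (-Λ) = {0}) (hfull : (interior Λ).Nonempty)
    (κ : Fin k → ℚ) (hκ : (fun i => ((κ i : ℝ))) ∈ interior Λ) :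
    ∃ q : ℚ, 0 < q ∧
      (∫ y in dualCone Λ, Real.exp (-∑ i, (κ i : ℝ) * y i)) = (q : ℝ) := by
  obtain ⟨hpos, q, hq⟩ := XFunction_rational_value_general (algebraMap ℚ ℝ).fieldRange
    (fun j i => ⟨g j i, rfl⟩) hΛ hsal (fun i => ⟨κ i, rfl⟩) hκ
  exact ⟨q, Rat.cast_pos.1 (hpos.trans_eq hq.symm), hq.symm⟩
end
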